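/- Let (K, v_K) be a field with a non-trivial real-valued valuation, let L be a finite separable field extension of K, and let v_L be a real-valued valuation on L extending v_K, with rings of integers K° and L°. Then H₁(𝕃_{L°/K°}) = 0, i.e. the L°-module Algebra.H1Cotangent K° L° is trivial. -/

import Mathlib

set_option synthInstance.maxHeartbeats 800000
set_option maxHeartbeats 1600000

noncomputable section

/-- The unit ball (ring of integers) of a real-valued additive semi-valuation. -/
def AddValuation.unitBall {A : Type*} [CommRing A] (v : AddValuation A (WithTop ℝ)) :
    Subring A where
  carrier := {a | 0 ≤ v a}
  zero_mem' := by simp only [Set.mem_setOf_eq, AddValuation.map_zero]; exact le_top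
  one_mem' := by simp only [Set.mem_setOf_eq, AddValuation.map_one]; exact le_refl _
  add_mem' := by
    intro a b ha hb
    exact le_trans (le_min ha hb) (v.map_add a b)
  mul_mem' := by
    intro a b ha hb
    simp only [Set.mem_setOf_eq, AddValuation.map_mul]
    exact add_nonneg ha hb
  neg_mem' := by
    intro a ha
    simpa only [Set.mem_setOf_eq, AddValuation.map_neg] using ha

/-- A real-valued additive valuation on a field is *non-trivial* if it does not vanish on all
of `K^×`. -/
def AddValuation.IsNontrivial {K : Type*} [Field K] (v : AddValuation K (WithTop ℝ)) : Prop :=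
  ∃ x : K, x ≠ 0 ∧ v x ≠ 0

set_option linter.unusedSectionVars false
set_option linter.style.haveILetI false

namespace HCot
open MvPolynomial

/-- A derivation-like map on a polynomial ring vanishes as soon as all chain-rule terms vanish. -/
theorem deriv_vanish {σ R N : Type*} [CommRing R] [CommRing N]
    (ψ : MvPolynomial σ R →+* N) (δ : MvPolynomial σ R →+ N)
    (hC : ∀ r, δ (C r) = 0) (hmul : ∀ F G, δ (F * G) = ψ F * δ G + ψ G * δ F)
    (F : MvPolynomial σ R) (hF : ∀ b, ψ (pderiv b F) * δ (X b) = 0) : δ F = 0 := by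
  let _ : Algebra (MvPolynomial σ R) N := ψ.toAlgebra
  let _ : Algebra R N := (ψ.comp C).toAlgebra
  have : IsScalarTower R (MvPolynomial σ R) N := IsScalarTower.of_algebraMap_eq (fun r => rfl)
  let D : Derivation R (MvPolynomial σ R) N := Derivation.mk'
    { toFun := δ
      map_add' := δ.map_add
      map_smul' := by
        intro r G
        rw [MvPolynomial.smul_eq_C_mul, hmul, hC, mul_zero, add_zero, Algebra.smul_def]
        rfl }
    (by
      intro F G
      change δ (F * G) = F • δ G + G • δ F
      rw [hmul, Algebra.smul_def, Algebra.smul_def]; rfl)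
  classical
  let D2 : Derivation R (MvPolynomial σ R) N :=
    ∑ b ∈ F.vars, (LinearMap.toSpanSingleton (MvPolynomial σ R) N (δ (X b))).compDer (pderiv b)
  have h2 : ∀ G, D2 G = ∑ b ∈ F.vars, ψ (pderiv b G) * δ (X b) := by
    intro G
    have : D2 G = ∑ b ∈ F.vars,
        ((LinearMap.toSpanSingleton (MvPolynomial σ R) N (δ (X b))).compDer (pderiv b)) G := by
      simp only [D2]
      rw [← Derivation.coeFnAddMonoidHom_apply, map_sum, Finset.sum_apply]
      rfl
    rw [this]
    refine Finset.sum_congr rfl fun b _ => ?_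
    change (pderiv b G) • δ (X b) = _
    rw [Algebra.smul_def]; rfl
  have h3 : D F = D2 F := by
    apply derivation_eq_of_forall_mem_vars
    intro i hi
    rw [h2]
    change δ (X i) = _
    rw [Finset.sum_eq_single i]
    · simp
    · intro b _ hb
      rw [pderiv_X_of_ne (by tauto)]; simp
    · intro h; exact absurd hi h
  change D F = 0
  rw [h3, h2]
  exact Finset.sum_eq_zero fun b _ => hF b

section frame
variable {E L : Type*} [CommRing E] [Field L] (φ : E →+* L) (B : Subring L)

/-- evaluation map `E[Y_b : b ∈ B] → L`. -/
def ev : MvPolynomial B E →+* L := eval₂Hom φ (fun b : B => (b : L))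

/-- polynomials with coefficients in `S` vanishing under `ev`. -/
def JS (S : Subring E) : Set (MvPolynomial B E) :=
  {p | (∀ m, coeff m p ∈ S) ∧ ev φ B p = 0}

/-- finite sums of products of two elements of `JS`. -/
def J2 (S : Subring E) : AddSubmonoid (MvPolynomial B E) :=
  AddSubmonoid.closure {r | ∃ p ∈ JS φ B S, ∃ q ∈ JS φ B S, r = p * q}

variable {φ B}

theorem J2_union {ι : Type*} {l : Filter ι} {S : Subring E} {T : ι → Subring E}
    (h : ∀ g ∈ S, ∀ᶠ i in l, g ∈ T i) {F : MvPolynomial B E} (hF : F ∈ J2 φ B S) :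
    ∀ᶠ i in l, F ∈ J2 φ B (T i) := by
  have key : ∀ p ∈ JS φ B S, ∀ᶠ i in l, p ∈ JS φ B (T i) := by
    intro p hp
    have : ∀ᶠ i in l, ∀ m ∈ p.support, coeff m p ∈ T i :=
      (Filter.eventually_all_finset p.support).2 fun m _ => h _ (hp.1 m)
    filter_upwards [this] with i hi
    refine ⟨fun m => ?_, hp.2⟩
    by_cases hm : m ∈ p.support
    · exact hi m hm
    · rw [notMem_support_iff.1 hm]; exact zero_mem _
  induction hF using AddSubmonoid.closure_induction with
  | mem r hr =>
    obtain ⟨p, hp, q, hq, rfl⟩ := hr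
    filter_upwards [key p hp, key q hq] with i h1 h2
    exact AddSubmonoid.subset_closure ⟨p, h1, q, h2, rfl⟩
  | zero => exact Filter.Eventually.of_forall fun i => zero_mem _
  | add x y _ _ hx hy =>
    filter_upwards [hx, hy] with i h1 h2
    exact add_mem h1 h2

theorem J2_mono {S T : Subring E} (h : S ≤ T) : J2 φ B S ≤ J2 φ B T := by
  apply AddSubmonoid.closure_mono
  rintro r ⟨p, hp, q, hq, rfl⟩
  exact ⟨p, ⟨fun m => h (hp.1 m), hp.2⟩, q, ⟨fun m => h (hq.1 m), hq.2⟩, rfl⟩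

theorem J2_ev {S : Subring E} {F : MvPolynomial B E} (hF : F ∈ J2 φ B S) : ev φ B F = 0 := by
  induction hF using AddSubmonoid.closure_induction with
  | mem r hr =>
    obtain ⟨p, hp, q, hq, rfl⟩ := hr
    rw [map_mul, hp.2, zero_mul]
  | zero => simp
  | add x y _ _ hx hy => rw [map_add, hx, hy, add_zero]

/-- lifting along a surjection onto the coefficient subring -/
theorem J2_lift {S : Subring E} {R : Type*} [CommRing R] (θ : R →+* E)
    (hθ : ∀ s ∈ S, ∃ r, θ r = s) {F : MvPolynomial B E} (hF : F ∈ J2 φ B S) :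
    ∃ W ∈ (RingHom.ker ((ev φ B).comp (map θ))) ^ 2, map θ W = F := by
  have key : ∀ p ∈ JS φ B S, ∃ P ∈ RingHom.ker ((ev φ B).comp (map (σ := B) θ)), map θ P = p := by
    intro p hp
    have : p ∈ Set.range (map (σ := B) θ) := by
      rw [MvPolynomial.mem_range_map_iff_coeffs_subset]
      intro c hc
      obtain ⟨m, _, rfl⟩ := MvPolynomial.mem_coeffs_iff.1 hc
      exact hθ _ (hp.1 m)
    obtain ⟨P, rfl⟩ := this
    exact ⟨P, hp.2, rfl⟩
  induction hF using AddSubmonoid.closure_induction with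
  | mem r hr =>
    obtain ⟨p, hp, q, hq, rfl⟩ := hr
    obtain ⟨P, hP, rfl⟩ := key p hp
    obtain ⟨Q, hQ, rfl⟩ := key q hq
    exact ⟨P * Q, by rw [pow_two]; exact Ideal.mul_mem_mul hP hQ, map_mul _ _ _⟩
  | zero => exact ⟨0, zero_mem _, map_zero _⟩
  | add x y _ _ hx hy =>
    obtain ⟨U, hU, rfl⟩ := hx
    obtain ⟨V, hV, rfl⟩ := hy
    exact ⟨U + V, add_mem hU hV, map_add _ _ _⟩

/-- pushing forward squares of kernels -/
theorem J2_push {S : Subring E} {W : MvPolynomial B S}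
    (hW : W ∈ (RingHom.ker ((ev φ B).comp (map S.subtype))) ^ 2) :
    map S.subtype W ∈ J2 φ B S := by
  rw [pow_two] at hW
  have key : ∀ p ∈ RingHom.ker ((ev φ B).comp (map (σ := B) S.subtype)),
      map S.subtype p ∈ JS φ B S := by
    intro p hp
    exact ⟨fun m => by rw [coeff_map]; exact (coeff m p).2, hp⟩
  induction hW using Submodule.mul_induction_on' with
  | mem_mul_mem m hm n hn =>
    rw [map_mul]
    exact AddSubmonoid.subset_closure ⟨_, key m hm, _, key n hn, rfl⟩
  | add x _ y _ hx hy => rw [map_add]; exact add_mem hx hy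

/-- The subring `S[s]`. -/
def adj (S : Subring E) (s : E) : Subring E := (Polynomial.eval₂RingHom S.subtype s).range

theorem le_adj (S : Subring E) (s : E) : S ≤ adj S s := by
  intro g hg
  exact ⟨Polynomial.C ⟨g, hg⟩, by simp⟩

theorem mem_adj (S : Subring E) (s : E) : s ∈ adj S s := ⟨Polynomial.X, by simp⟩

end frame
end HCot

namespace HCot
open MvPolynomial
section frame
variable {E L : Type*} [CommRing E] [Field L] {φ : E →+* L} {B : Subring L}

theorem adj_aux {R : Type*} [CommRing R] (ι : R →+* E) (s : E) (b0 : B) (hs : φ s = b0) (h k : R)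
    (hk : ι k = ι h * s) (hk0 : h = 0 → k = 0) (hh : h = 0 ∨ φ (ι h) ≠ 0)
    (Hz : ∀ z : Polynomial R, Polynomial.eval₂ ι s z = 0 →
      ∃ (e : R) (b : B) (w : Polynomial R), φ (ι e) * b = 1 ∧
        Polynomial.C e * z = (Polynomial.C h * Polynomial.X - Polynomial.C k) * w)
    (F0 : MvPolynomial B R) (W : MvPolynomial B (Polynomial R))
    (hW : W ∈ (RingHom.ker ((ev φ B).comp (map (Polynomial.eval₂RingHom ι s)))) ^ 2)
    (hWF : map (Polynomial.eval₂RingHom ι s) W = map ι F0) :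
    F0 ∈ (RingHom.ker ((ev φ B).comp (map ι))) ^ 2 := by
  classical
  let θ : Polynomial R →+* E := Polynomial.eval₂RingHom ι s
  let evQ : MvPolynomial B (Polynomial R) →+* L := (ev φ B).comp (map θ)
  let JQ : Ideal (MvPolynomial B (Polynomial R)) := RingHom.ker evQ
  have evC : ∀ z, evQ (C z) = φ (θ z) := fun z => by simp [evQ, ev]
  have evX : ∀ b, evQ (X b) = (b : L) := fun z => by simp [evQ, ev]
  change W ∈ JQ ^ 2 at hW
  let FQ : MvPolynomial B (Polynomial R) := map Polynomial.C F0
  have hθC : θ.comp Polynomial.C = ι := by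
    ext r; simp [θ]
  have hFQ : map θ FQ = map ι F0 := by
    simp only [FQ]; rw [map_map, hθC]
  let p : Polynomial R := Polynomial.C h * Polynomial.X - Polynomial.C k
  have hpθ : θ p = 0 := by simp [θ, p, hk]
  have hpJ : C p ∈ JQ := by
    change evQ (C p) = 0
    rw [evC, hpθ, map_zero]
  have step1 : ∀ z : Polynomial R, θ z = 0 →
      ∃ G : MvPolynomial B (Polynomial R), C z - C p * G ∈ JQ ^ 2 := by
    intro z hz
    obtain ⟨e, b, w, heb, hw⟩ := Hz z hz
    refine ⟨C w * X b, ?_⟩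
    have h1 : C z - C p * (C w * X b) = C z * (1 - X b * C (Polynomial.C e)) := by
      rw [← mul_assoc, ← C_mul, ← hw, C_mul]; ring
    rw [h1, pow_two]
    apply Ideal.mul_mem_mul
    · change evQ (C z) = 0
      rw [evC, hz, map_zero]
    · change evQ _ = 0
      rw [map_sub, map_one, map_mul, evC, evX, sub_eq_zero, ← heb, mul_comm]
      simp [θ]
  have step2 : ∃ G : MvPolynomial B (Polynomial R), (W - FQ) - C p * G ∈ JQ ^ 2 := by
    have hz : ∀ m, θ (coeff m (W - FQ)) = 0 := by
      intro m
      rw [← coeff_map, map_sub, hWF, hFQ, sub_self, coeff_zero]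
    choose G hG using fun m => step1 _ (hz m)
    refine ⟨∑ m ∈ (W - FQ).support, G m * monomial m 1, ?_⟩
    have : (W - FQ) - C p * ∑ m ∈ (W - FQ).support, G m * monomial m 1 =
        ∑ m ∈ (W - FQ).support, (C (coeff m (W - FQ)) - C p * G m) * monomial m 1 := by
      rw [Finset.mul_sum]
      refine (congrArg (fun t => t - ∑ m ∈ (W - FQ).support, C p * (G m * monomial m 1))
        (W - FQ).as_sum).trans ?_
      rw [← Finset.sum_sub_distrib]
      refine Finset.sum_congr rfl fun m _ => ?_
      rw [sub_mul, C_mul_monomial, mul_one, mul_assoc]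
    rw [this]
    exact Ideal.sum_mem _ fun m _ => Ideal.mul_mem_right _ _ (hG m)
  obtain ⟨G, hG⟩ := step2
  have hev0 : evQ FQ = 0 := by
    change ev φ B (map θ FQ) = 0
    rw [hFQ, ← hWF]
    exact Ideal.pow_le_self (by norm_num) hW
  have step3 : FQ + C p * G ∈ JQ ^ 2 := by
    have := Ideal.sub_mem _ hW hG
    convert this using 1; ring
  have step4 : FQ ∈ JQ ^ 2 := by
    have hpG : C p * G ∈ JQ ^ 2 := by
      rcases hh with h0 | h0
      · have hp0 : p = 0 := by
          simp [p, h0, hk0 h0]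
        rw [hp0]; simp
      · -- dual numbers
        let g : Polynomial R →+* DualNumber L := Polynomial.eval₂RingHom
          ((TrivSqZeroExt.inlHom L L).comp (φ.comp ι))
          (TrivSqZeroExt.inl (φ s) + DualNumber.eps)
        let d : MvPolynomial B (Polynomial R) →+* DualNumber L :=
          eval₂Hom g (fun b : B => TrivSqZeroExt.inl (b : L))
        have hfst : ∀ V, (d V).fst = evQ V := by
          intro V
          have : ((TrivSqZeroExt.fstHom L L L).toRingHom.comp d) = evQ := by
            apply MvPolynomial.ringHom_ext
            · intro r
              rw [evC]
              have : ((TrivSqZeroExt.fstHom L L L).toRingHom.comp g) = φ.comp θ := by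
                apply Polynomial.ringHom_ext
                · intro a; simp [g, θ]
                · simp [g, θ]
              have := congrArg (fun f => f r) this
              simpa [d] using this
            · intro b; rw [evX]; simp [d]
          rw [← this]; rfl
        have hd2 : ∀ V ∈ JQ ^ 2, d V = 0 := by
          intro V hV
          rw [pow_two] at hV
          induction hV using Submodule.mul_induction_on' with
          | mem_mul_mem m hm n hn =>
            rw [map_mul]
            have h1 : (d m).fst = 0 := by rw [hfst]; exact hm
            have h2 : (d n).fst = 0 := by rw [hfst]; exact hn
            ext <;> simp [h1, h2]
          | add x _ y _ hx hy => rw [map_add, hx, hy, add_zero]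
        have hdF : d FQ = 0 := by
          have : ∀ V : MvPolynomial B R, d (map Polynomial.C V) =
              TrivSqZeroExt.inl (evQ (map Polynomial.C V)) := by
            intro V
            have : d.comp (map Polynomial.C) =
                (TrivSqZeroExt.inlHom L L).comp (evQ.comp (map (σ := B) Polynomial.C)) := by
              apply MvPolynomial.ringHom_ext
              · intro r; simp [d, g, evC, θ]
              · intro b; simp [d, evX]
            exact congrArg (fun f => f V) this
          rw [this]
          change TrivSqZeroExt.inl (evQ FQ) = 0
          rw [hev0]; simp
        have hdp : d (C p) = φ (ι h) • DualNumber.eps := by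
          simp [d, g, p, hk]
          ext <;> simp
        have := hd2 _ step3
        rw [map_add, hdF, zero_add, map_mul, hdp] at this
        have h3 : φ (ι h) * evQ G = 0 := by
          have := congrArg TrivSqZeroExt.snd this
          simpa [hfst] using this
        have hGJ : G ∈ JQ := by
          rcases mul_eq_zero.1 h3 with h4 | h4
          · exact absurd h4 h0
          · exact h4
        rw [pow_two]
        exact Ideal.mul_mem_mul hpJ hGJ
    have h7 := Ideal.sub_mem _ step3 hpG
    have h8 : FQ + C p * G - C p * G = FQ := by ring
    rwa [h8] at h7
  -- retraction
  let r : MvPolynomial B (Polynomial R) →+* MvPolynomial B R :=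
    eval₂Hom (Polynomial.eval₂RingHom C (X b0)) X
  have hr : ((ev φ B).comp (map ι)).comp r = evQ := by
    apply MvPolynomial.ringHom_ext
    · intro z
      rw [evC]
      have : (((ev φ B).comp (map ι)).comp r).comp C = φ.comp θ := by
        apply Polynomial.ringHom_ext
        · intro a; simp [r, θ, ev]
        · simp [r, θ, ev, hs]
      exact congrArg (fun f => f z) this
    · intro b; rw [evX]; simp [r, ev]
  have hrF : r FQ = F0 := by
    have : r.comp (map Polynomial.C) = RingHom.id _ := by
      apply MvPolynomial.ringHom_ext
      · intro a; simp [r]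
      · intro b; simp [r]
    exact congrArg (fun f => f F0) this
  rw [← hrF]
  have h5 : JQ ≤ Ideal.comap r (RingHom.ker ((ev φ B).comp (map ι))) := by
    intro V hV
    change ((ev φ B).comp (map ι)) (r V) = 0
    have := congrArg (fun f => f V) hr
    exact this.trans hV
  have h6 : Ideal.map r (JQ ^ 2) ≤ (RingHom.ker ((ev φ B).comp (map ι))) ^ 2 := by
    rw [Ideal.map_pow]
    exact Ideal.pow_right_mono (Ideal.map_le_iff_le_comap.2 h5) 2
  exact h6 (Ideal.mem_map_of_mem _ step4)

theorem adj_lemma (S : Subring E) (s : E) (b0 : B) (hs : φ s = b0) (h k : S)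
    (hk : (k : E) = h * s) (hh : h = 0 ∨ φ h ≠ 0)
    (Hz : ∀ z : Polynomial S, Polynomial.eval₂ S.subtype s z = 0 →
      ∃ (e : S) (b : B) (w : Polynomial S), φ e * b = 1 ∧
        Polynomial.C e * z = (Polynomial.C h * Polynomial.X - Polynomial.C k) * w)
    (F0 : MvPolynomial B S) (hF : map S.subtype F0 ∈ J2 φ B (adj S s)) :
    map S.subtype F0 ∈ J2 φ B S := by
  obtain ⟨W, hW, hWF⟩ := J2_lift (φ := φ) (B := B) (S := adj S s)
    (Polynomial.eval₂RingHom S.subtype s) (fun r hr => hr) hF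
  apply J2_push
  exact adj_aux S.subtype s b0 hs h k hk (fun h0 => Subtype.ext (by rw [hk, h0]; simp)) hh Hz F0 W
    hW hWF

end frame
end HCot

namespace HCot
open MvPolynomial

theorem taylor_mem {σ R L : Type*} [CommRing R] [CommRing L] (e : MvPolynomial σ R →+* L)
    (g : σ → R) (hg : ∀ b, e (C (g b)) = e (X b)) (F : MvPolynomial σ R)
    (hF : ∀ b, e (pderiv b F) = 0) : F - C (eval g F) ∈ (RingHom.ker e) ^ 2 := by
  let J := RingHom.ker e
  let π := Ideal.Quotient.mk (J ^ 2)
  have hJ : ∀ G, G - C (eval g G) ∈ J := by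
    intro G
    change e (G - C (eval g G)) = 0
    rw [map_sub, sub_eq_zero]
    have : e = (e.comp C).comp (eval g) := by
      apply MvPolynomial.ringHom_ext
      · intro r; simp
      · intro b; simp [hg]
    exact congrArg (fun f => f G) this
  have h0 : ∀ G ∈ J, ∀ G' ∈ J, π (G * G') = 0 := by
    intro G hG G' hG'
    rw [Ideal.Quotient.eq_zero_iff_mem, pow_two]
    exact Ideal.mul_mem_mul hG hG'
  let δ : MvPolynomial σ R →+ (MvPolynomial σ R ⧸ J ^ 2) :=
    { toFun := fun G => π (G - C (eval g G))
      map_zero' := by simp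
      map_add' := by intro a b; rw [← map_add]; congr 1; rw [map_add, C_add]; ring }
  have hδ : ∀ G, δ G = π (G - C (eval g G)) := fun G => rfl
  have := deriv_vanish π δ (by intro r; rw [hδ]; simp) (by
    intro G G'
    rw [hδ, hδ, hδ, ← map_mul, ← map_mul, ← map_add, ← sub_eq_zero, ← map_sub]
    have h1 := h0 _ (hJ G) _ (neg_mem (hJ G'))
    convert h1 using 2
    rw [map_mul, C_mul]; ring) F (by
    intro b
    rw [hδ, ← map_mul]
    exact h0 _ (hF b) _ (hJ _))
  rw [hδ] at this
  exact Ideal.Quotient.eq_zero_iff_mem.1 this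

theorem final_step {K L R : Type*} [Field K] [Field L] [Algebra K L] [CommRing R]
    (ι : R →+* K) (B : Subring L) (hιB : ∀ r, algebraMap K L (ι r) ∈ B) (x : L)
    (hsep : Polynomial.aeval x (minpoly K x).derivative ≠ 0)
    (hgen : ∀ b ∈ B, ∃ g : Polynomial K, Polynomial.aeval x g = b)
    (F : MvPolynomial B R)
    (h0 : eval₂ ((algebraMap K L).comp ι) (fun b : B => (b : L)) F = 0)
    (h1 : ∀ b, eval₂ ((algebraMap K L).comp ι) (fun b : B => (b : L)) (pderiv b F) = 0) :
    map (Polynomial.C.comp ι) F ∈ J2 (Polynomial.aeval x : Polynomial K →ₐ[K] L).toRingHom B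
      (B.comap (Polynomial.aeval x : Polynomial K →ₐ[K] L).toRingHom) := by
  let φ : Polynomial K →+* L := (Polynomial.aeval x : Polynomial K →ₐ[K] L).toRingHom
  have hφ : ∀ q, φ q = Polynomial.aeval x q := fun q => rfl
  change map (Polynomial.C.comp ι) F ∈ J2 φ B (B.comap φ)
  choose g hg using fun b : B => hgen b b.2
  have hgφ : ∀ b, φ (g b) = b := hg
  let S := B.comap φ
  let ιS : R →+* S := RingHom.codRestrict (Polynomial.C.comp ι) S (by
    intro r
    change φ _ ∈ B
    simpa [hφ] using hιB r)
  have hιS : S.subtype.comp ιS = Polynomial.C.comp ι := by ext r; rfl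
  let gS : B → S := fun b => ⟨g b, by change φ _ ∈ B; rw [hgφ]; exact b.2⟩
  let e : MvPolynomial B S →+* L := (ev φ B).comp (map S.subtype)
  have heF : ∀ G : MvPolynomial B R, e (map ιS G) =
      eval₂ ((algebraMap K L).comp ι) (fun b : B => (b : L)) G := by
    intro G
    change ev φ B (map S.subtype (map ιS G)) = _
    rw [map_map, hιS]
    simp only [ev, coe_eval₂Hom, eval₂_map]
    congr 1
    ext r; simp [hφ]
  have hT := taylor_mem e gS (by intro b; simp [e, ev, gS, hgφ]) (map ιS F) (by
    intro b; rw [pderiv_map, heF]; exact h1 b)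
  have hT2 := J2_push hT
  rw [map_sub, map_map, hιS, map_C] at hT2
  set q : Polynomial K := S.subtype (eval gS (map ιS F)) with hq
  have hq2 : q = eval₂ (Polynomial.C.comp ι) g F := by
    rw [hq, eval_map, ← hιS]
    change S.subtype (eval₂Hom ιS gS F) = eval₂Hom _ g F
    rw [← RingHom.comp_apply]
    congr 1
    apply MvPolynomial.ringHom_ext
    · intro r; simp
    · intro b; simp [gS]
  suffices hC : C q ∈ J2 φ B S by
    have := add_mem hT2 hC
    simpa using this
  have hφq : ∀ G : MvPolynomial B R, φ (eval₂ (Polynomial.C.comp ι) g G) =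
      eval₂ ((algebraMap K L).comp ι) (fun b : B => (b : L)) G := by
    intro G
    rw [eval₂_comp_left]
    congr 1
    · ext r; simp [hφ]
    · ext b; simp [hgφ]
  have hq0 : φ q = 0 := by rw [hq2, hφq, h0]
  have hqd : φ (Polynomial.derivative q) = 0 := by
    let δ : MvPolynomial B R →+ L :=
      φ.toAddMonoidHom.comp ((Polynomial.derivative (R := K)).toAddMonoidHom.comp
        (eval₂Hom (Polynomial.C.comp ι) g).toAddMonoidHom)
    have hδ : ∀ G, δ G = φ (Polynomial.derivative (eval₂ (Polynomial.C.comp ι) g G)) :=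
      fun G => rfl
    rw [hq2, ← hδ]
    apply deriv_vanish (eval₂Hom ((algebraMap K L).comp ι) (fun b : B => (b : L))) δ
    · intro r; rw [hδ]; simp
    · intro G G'
      rw [hδ, hδ, hδ, eval₂_mul, Polynomial.derivative_mul, map_add, map_mul, map_mul, hφq, hφq]
      simp only [coe_eval₂Hom]
      ring
    · intro b
      simp only [coe_eval₂Hom]
      rw [h1, zero_mul]
  obtain ⟨k, hk⟩ := minpoly.dvd K x hq0
  have hf0 : φ (minpoly K x) = 0 := minpoly.aeval K x
  have hk0 : φ k = 0 := by
    rw [hk, Polynomial.derivative_mul, map_add, map_mul, map_mul, hf0, zero_mul, add_zero] at hqd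
    exact (mul_eq_zero.1 hqd).resolve_left hsep
  rw [hk, C_mul]
  have hJ : ∀ r, φ r = 0 → C r ∈ JS φ B S := by
    intro r hr
    refine ⟨fun m => ?_, by simp [ev, hr]⟩
    classical
    rw [coeff_C]
    split_ifs
    · change φ r ∈ B
      rw [hr]; exact zero_mem _
    · exact zero_mem _
  exact AddSubmonoid.subset_closure ⟨_, hJ _ hf0, _, hJ _ hk0, rfl⟩

theorem pderiv_of_cotangentComplex {R S σ : Type*} [CommRing R] [CommRing S] [Algebra R S]
    (P : Algebra.Generators R S σ) (F : P.toExtension.ker)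
    (hz : P.toExtension.cotangentComplex (Algebra.Extension.Cotangent.mk F) = 0) (b : σ) :
    aeval P.val (pderiv b (F.1 : MvPolynomial σ R)) = 0 := by
  rw [Algebra.Extension.cotangentComplex_mk] at hz
  have := Algebra.Generators.cotangentSpaceBasis_repr_one_tmul P F.1 b
  erw [hz] at this
  exact this.symm.trans (by simp)

/-- The elementary criterion. -/
theorem subsingleton_of {R S : Type*} [CommRing R] [CommRing S] [Algebra R S]
    (h : ∀ F : MvPolynomial S R, aeval (fun s : S => s) F = 0 →
      (∀ b, aeval (fun s : S => s) (pderiv b F) = 0) →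
      F ∈ (RingHom.ker (aeval (R := R) (fun s : S => s)).toRingHom) ^ 2) :
    Subsingleton (Algebra.H1Cotangent R S) := by
  let P := Algebra.Generators.self R S
  change Subsingleton P.toExtension.H1Cotangent
  rw [Algebra.Extension.subsingleton_h1Cotangent, injective_iff_map_eq_zero]
  intro z hz
  obtain ⟨F, rfl⟩ := Algebra.Extension.Cotangent.mk_surjective z
  have h1 : ∀ b : S, aeval (fun s : S => s) (pderiv b (F.1 : MvPolynomial S R)) = 0 :=
    fun b => pderiv_of_cotangentComplex P F hz b
  have h0 : aeval (fun s : S => s) (F.1 : MvPolynomial S R) = 0 := F.2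
  have h2 := h F.1 h0 h1
  rw [Algebra.Extension.Cotangent.mk_eq_zero_iff]
  exact h2

end HCot

namespace HCot
open Polynomial

/-- nonarchimedean absolute values, as a class -/
class NA {L : Type*} [Field L] (a : AbsoluteValue L ℝ) : Prop where
  na : IsNonarchimedean a

section gauss
variable {K L : Type*} [Field K] [Field L] [Algebra K L] (a : AbsoluteValue L ℝ) (x : L)

/-- Gauss norm centered at `x`. -/
def N (ρ : ℝ) (g : K[X]) : ℝ := (taylor x (g.map (algebraMap K L))).gaussNorm a ρ

/-- value at `x`. -/
def vv (g : K[X]) : ℝ := a (aeval x g)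

/-- Taylor coefficients. -/
def tc (g : K[X]) (i : ℕ) : L := (taylor x (g.map (algebraMap K L))).coeff i

theorem tc_zero (g : K[X]) : a (tc x g 0) = vv a x g := by
  simp [tc, vv, taylor_coeff_zero, aeval_def, eval_map]

theorem tmap_ne {g : K[X]} (hg : g ≠ 0) : taylor x (g.map (algebraMap K L)) ≠ 0 := by
  intro h
  have h2 : g.map (algebraMap K L) = 0 := by
    apply taylor_injective x
    rw [h, map_zero]
  exact hg ((Polynomial.map_eq_zero _).1 h2)

theorem le_N {ρ : ℝ} (hρ : 0 ≤ ρ) (g : K[X]) (i : ℕ) : a (tc x g i) * ρ ^ i ≤ N a x ρ g :=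
  le_gaussNorm a _ hρ i

theorem exists_N (ρ : ℝ) (g : K[X]) : ∃ i, N a x ρ g = a (tc x g i) * ρ ^ i :=
  exists_eq_gaussNorm a ρ _

theorem vv_le_N {ρ : ℝ} (hρ : 0 ≤ ρ) (g : K[X]) : vv a x g ≤ N a x ρ g := by
  have := le_N a x hρ g 0
  rw [tc_zero, pow_zero, mul_one] at this
  exact this

theorem vv_nonneg (g : K[X]) : 0 ≤ vv a x g := a.nonneg _

theorem N_nonneg {ρ : ℝ} (hρ : 0 ≤ ρ) (g : K[X]) : 0 ≤ N a x ρ g :=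
  (vv_nonneg a x g).trans (vv_le_N a x hρ g)

theorem N_mono {ρ ρ' : ℝ} (hρ : 0 ≤ ρ) (h : ρ ≤ ρ') (g : K[X]) : N a x ρ g ≤ N a x ρ' g := by
  obtain ⟨i, hi⟩ := exists_N a x ρ g
  rw [hi]
  refine le_trans ?_ (le_N a x (hρ.trans h) g i)
  have := a.nonneg (tc x g i)
  gcongr

theorem N_zero (ρ : ℝ) : N a x ρ (0 : K[X]) = 0 := by simp [N]

theorem N_C (ρ : ℝ) (c : K) : N a x ρ (C c) = a (algebraMap K L c) := by simp [N]

theorem N_one (ρ : ℝ) : N a x ρ (1 : K[X]) = 1 := by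
  rw [← C_1, N_C]; simp

theorem N_pos {ρ : ℝ} (hρ : 0 < ρ) {g : K[X]} (hg : g ≠ 0) : 0 < N a x ρ g := by
  refine lt_of_le_of_ne (N_nonneg a x hρ.le g) (Ne.symm ?_)
  intro h
  unfold N at h
  rw [gaussNorm_eq_zero_iff a _ (fun x => by simp) hρ] at h
  exact tmap_ne x hg h

theorem N_strict {ρ ρ' : ℝ} (hρ : 0 < ρ) (h : ρ < ρ') (g : K[X])
    (he : N a x ρ' g = N a x ρ g) : N a x ρ' g = vv a x g := by
  obtain ⟨i, hi⟩ := exists_N a x ρ g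
  rcases Nat.eq_zero_or_pos i with rfl | hi0
  · rw [he, hi, tc_zero, pow_zero, mul_one]
  · by_cases h0 : tc x g i = 0
    · have h1 : N a x ρ g = 0 := by rw [hi, h0]; simp
      have := vv_le_N a x hρ.le g
      have := vv_nonneg a x g
      rw [he]; linarith
    · exfalso
      have h1 := le_N a x (hρ.le.trans h.le) g i
      have h2 : a (tc x g i) * ρ ^ i < a (tc x g i) * ρ' ^ i := by
        have := a.pos h0
        have := pow_lt_pow_left₀ h hρ.le hi0.ne'
        gcongr
      linarith

theorem N_cont (g : K[X]) : Continuous (fun ρ => N a x ρ g) := by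
  unfold N gaussNorm
  split_ifs with h
  · exact Continuous.finset_sup'_apply h (fun i _ => by fun_prop)
  · exact continuous_const

theorem N_X {ρ : ℝ} (hρ : 0 ≤ ρ) : ρ ≤ N a x ρ (X : K[X]) := by
  have := le_N a x hρ (X : K[X]) 1
  simpa [tc, taylor_X, coeff_X, coeff_C] using this

variable [NA a]

theorem N_mul {ρ : ℝ} (hρ : 0 < ρ) (g h : K[X]) : N a x ρ (g * h) = N a x ρ g * N a x ρ h := by
  simp only [N, Polynomial.map_mul, taylor_mul]
  exact gaussNorm_mul NA.na hρ _ _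

theorem N_pow {ρ : ℝ} (hρ : 0 < ρ) (g : K[X]) (n : ℕ) : N a x ρ (g ^ n) = N a x ρ g ^ n := by
  induction n with
  | zero => simp [N_one]
  | succ n ih => rw [pow_succ, pow_succ, N_mul a x hρ, ih]

theorem N_add {ρ : ℝ} (hρ : 0 ≤ ρ) (g h : K[X]) :
    N a x ρ (g + h) ≤ max (N a x ρ g) (N a x ρ h) := by
  simp only [N, Polynomial.map_add, map_add]
  exact isNonarchimedean_gaussNorm a NA.na hρ _ _

theorem N_neg {ρ : ℝ} (hρ : 0 < ρ) (g : K[X]) : N a x ρ (-g) = N a x ρ g := by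
  have : -g = C (-1) * g := by simp
  rw [this, N_mul a x hρ, N_C]; simp

theorem N_sub {ρ : ℝ} (hρ : 0 < ρ) (g h : K[X]) :
    N a x ρ (g - h) ≤ max (N a x ρ g) (N a x ρ h) := by
  rw [sub_eq_add_neg, ← N_neg a x hρ h]
  exact N_add a x hρ.le _ _

theorem vv_mul (g h : K[X]) : vv a x (g * h) = vv a x g * vv a x h := by simp [vv]
theorem vv_pow (g : K[X]) (n : ℕ) : vv a x (g ^ n) = vv a x g ^ n := by simp [vv]
theorem vv_C (c : K) : vv a x (C c) = a (algebraMap K L c) := by simp [vv]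

theorem vv_add (g h : K[X]) : vv a x (g + h) ≤ max (vv a x g) (vv a x h) := by
  simp only [vv, map_add]
  exact NA.na _ _

/-- equality in the ultrametric inequality -/
theorem N_add_eq {ρ : ℝ} (hρ : 0 < ρ) (g h : K[X]) (hlt : N a x ρ h < N a x ρ g) :
    N a x ρ (g + h) = N a x ρ g := by
  apply le_antisymm
  · exact (N_add a x hρ.le g h).trans (by rw [max_eq_left hlt.le])
  · have := N_sub a x hρ (g + h) h
    rw [add_sub_cancel_right] at this
    rcases le_max_iff.1 this with h1 | h1
    · exact h1
    · linarith

theorem vv_add_eq (g h : K[X]) (hlt : vv a x h < vv a x g) :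
    vv a x (g + h) = vv a x g := by
  apply le_antisymm
  · exact (vv_add a x g h).trans (by rw [max_eq_left hlt.le])
  · have := vv_add a x (g + h) (-h)
    rw [add_neg_cancel_right] at this
    have h2 : vv a x (-h) = vv a x h := by simp [vv]
    rcases le_max_iff.1 this with h1 | h1
    · exact h1
    · linarith

/-! constancy -/
variable {a} in
/-- `g` is constant slightly beyond `ρ`. -/
def Const (a : AbsoluteValue L ℝ) (x : L) (ρ : ℝ) (g : K[X]) : Prop :=
  g ≠ 0 ∧ ∃ ρ' > ρ, N a x ρ' g = vv a x g

variable {a x}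

theorem Const.of_le {ρ ρ' : ℝ} {g : K[X]} (hc : Const a x ρ g) (h : ρ' ≤ ρ) : Const a x ρ' g := by
  obtain ⟨h0, r, hr, h1⟩ := hc
  exact ⟨h0, r, lt_of_le_of_lt h hr, h1⟩

theorem N_eq_of_le {ρ ρ' : ℝ} {g : K[X]} (hρ : 0 ≤ ρ') (h : ρ' ≤ ρ)
    (he : N a x ρ g = vv a x g) : N a x ρ' g = vv a x g :=
  le_antisymm ((N_mono a x hρ h g).trans he.le) (vv_le_N a x hρ g)

theorem Const.eq {ρ : ℝ} (hρ : 0 ≤ ρ) {g : K[X]} (hc : Const a x ρ g) :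
    N a x ρ g = vv a x g := by
  obtain ⟨h0, r, hr, h1⟩ := hc
  exact N_eq_of_le hρ (le_of_lt hr) h1

theorem Const.pos {ρ : ℝ} (hρ : 0 < ρ) {g : K[X]} (hc : Const a x ρ g) : 0 < vv a x g := by
  rw [← hc.eq hρ.le]; exact N_pos a x hρ hc.1

theorem Const.eventually {ρ : ℝ} {g : K[X]} (hc : Const a x ρ g) :
    ∀ᶠ ρ' in nhdsWithin ρ (Set.Ioi ρ), Const a x ρ' g := by
  obtain ⟨h0, r, hr, h1⟩ := hc
  filter_upwards [Ioo_mem_nhdsGT hr] with ρ' hρ'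
  exact ⟨h0, r, hρ'.2, h1⟩

theorem Const.mul {ρ : ℝ} (hρ : 0 < ρ) {g h : K[X]} (hg : Const a x ρ g) (hh : Const a x ρ h) :
    Const a x ρ (g * h) := by
  obtain ⟨h0, r, hr, h1⟩ := hg
  obtain ⟨h0', r', hr', h1'⟩ := hh
  have hm : ρ < min r r' := lt_min hr hr'
  refine ⟨mul_ne_zero h0 h0', min r r', hm, ?_⟩
  have hp := hρ.trans hm
  rw [N_mul a x hp, vv_mul, N_eq_of_le hp.le (min_le_left _ _) h1,
    N_eq_of_le hp.le (min_le_right _ _) h1']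

theorem const_C {ρ : ℝ} {c : K} (hc : c ≠ 0) : Const a x ρ (C c) :=
  ⟨by simpa using hc, ρ + 1, by simp, by rw [N_C, vv_C]⟩

theorem Const.pow {ρ : ℝ} (hρ : 0 < ρ) {g : K[X]} (hg : Const a x ρ g) (n : ℕ) :
    Const a x ρ (g ^ n) := by
  induction n with
  | zero => rw [pow_zero, ← C_1]; exact const_C one_ne_zero
  | succ n ih => rw [pow_succ]; exact ih.mul hρ hg

theorem Const.of_mul {ρ : ℝ} (hρ : 0 < ρ) {g h : K[X]} (hc : Const a x ρ (g * h)) :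
    Const a x ρ g := by
  have hpos := hc.pos hρ
  obtain ⟨h0, r, hr, h1⟩ := hc
  have hr' : ρ < r := hr
  have hp := hρ.trans hr'
  refine ⟨left_ne_zero_of_mul h0, r, hr, ?_⟩
  rw [N_mul a x hp, vv_mul] at h1
  rw [vv_mul] at hpos
  have e1 := vv_le_N a x hp.le g
  have e2 := vv_le_N a x hp.le h
  have e3 := vv_nonneg a x g
  have e4 := vv_nonneg a x h
  refine le_antisymm ?_ e1
  by_contra hlt
  push Not at hlt
  have e5 : 0 < vv a x h := by
    rcases e4.eq_or_lt with h | h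
    · rw [← h] at hpos; simp at hpos
    · exact h
  nlinarith

theorem not_const_lt {ρ ρ' : ℝ} (hρ : 0 < ρ) (h : ρ < ρ') {g : K[X]} (hg : g ≠ 0)
    (hn : ¬ Const a x ρ g) : N a x ρ g < N a x ρ' g := by
  refine lt_of_le_of_ne (N_mono a x hρ.le h.le g) fun he => hn ⟨hg, ρ', h, ?_⟩
  exact N_strict a x hρ h g he.symm

theorem Const.add_small {ρ : ℝ} (hρ : 0 < ρ) {g h : K[X]} (hg : Const a x ρ g)
    (hh : N a x ρ h < vv a x g) : Const a x ρ (g + h) := by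
  have hpos := hg.pos hρ
  obtain ⟨h0, r, hr, h1⟩ := hg
  have hr' : ρ < r := hr
  have e : ∀ᶠ ρ' in nhdsWithin ρ (Set.Ioi ρ), N a x ρ' h < vv a x g :=
    ((N_cont a x h).continuousAt.eventually (gt_mem_nhds hh)).filter_mono nhdsWithin_le_nhds
  obtain ⟨r2, hr2, hr3, hr4⟩ := (e.and (Ioo_mem_nhdsGT hr')).exists
  have hp := hρ.trans hr3
  have e1 := N_eq_of_le hp.le hr4.le h1
  have e2 : N a x r2 (g + h) = vv a x g := by
    rw [N_add_eq a x hp g h (by rw [e1]; exact hr2), e1]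
  have e3 : vv a x (g + h) = vv a x g :=
    vv_add_eq a x g h ((vv_le_N a x hp.le h).trans_lt hr2)
  refine ⟨?_, r2, hr3, by rw [e2, e3]⟩
  intro h00
  rw [h00] at e2
  rw [N_zero] at e2
  linarith

/-- lemma on `R_{ρ+}` -/
theorem N_lt_one_of {ρ ρ' : ℝ} (hρ : 0 < ρ) (h : ρ < ρ') {g : K[X]} (h1 : N a x ρ' g ≤ 1)
    (h2 : vv a x g < 1) : N a x ρ g < 1 := by
  by_contra hn
  push Not at hn
  have h3 := N_mono a x hρ.le h.le g
  have := N_strict a x hρ h g (le_antisymm (h1.trans hn) h3)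
  linarith

end gauss
end HCot

namespace HCot
open Polynomial

section alg
variable {K L : Type*} [Field K] [Field L] [Algebra K L] [Algebra.IsAlgebraic K L]
  (a : AbsoluteValue L ℝ) [NA a]

theorem torsion (y : L) (hy : y ≠ 0) :
    ∃ k > 0, ∃ c : K, c ≠ 0 ∧ a y ^ k = a (algebraMap K L c) := by
  have hyint : IsIntegral K y := Algebra.IsIntegral.isIntegral y
  set p := minpoly K y with hp
  have hp0 : p ≠ 0 := minpoly.ne_zero hyint
  let t : ℕ → L := fun i => algebraMap K L (p.coeff i) * y ^ i
  have hsum : ∑ i ∈ p.support, t i = 0 := by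
    have := minpoly.aeval K y
    rw [← hp, aeval_def, eval₂_eq_sum, Polynomial.sum] at this
    exact this
  obtain ⟨i, hi, hmax⟩ := Finset.exists_max_image p.support (fun i => a (t i))
    (by simpa using hp0)
  have hne : ∀ i ∈ p.support, algebraMap K L (p.coeff i) ≠ 0 := by
    intro i hi; simpa using hi
  have hti : t i ≠ 0 := mul_ne_zero (hne i hi) (pow_ne_zero _ hy)
  obtain ⟨j, hj, hji, he⟩ : ∃ j ∈ p.support, j ≠ i ∧ a (t j) = a (t i) := by
    by_contra hcon
    push Not at hcon
    have := IsNonarchimedean.apply_sum_eq_of_lt (NA.na (a := a)) (fun z => by simp) hi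
      (l := t) (fun j hj hji => lt_of_le_of_ne (hmax j hj) (hcon j hj hji))
    rw [hsum, map_zero] at this
    exact hti (a.eq_zero.1 this.symm)
  have main : ∀ i j : ℕ, i < j → i ∈ p.support → j ∈ p.support → a (t j) = a (t i) →
      ∃ k > 0, ∃ c : K, c ≠ 0 ∧ a y ^ k = a (algebraMap K L c) := by
    intro i j hij hi hj he
    refine ⟨j - i, by omega, p.coeff i / p.coeff j,
      div_ne_zero (by simpa using hi) (by simpa using hj), ?_⟩
    have h1 := a.pos (hne i hi)
    have h2 := a.pos (hne j hj)
    have h3 := a.pos hy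
    simp only [t, map_mul, map_pow] at he
    rw [map_div₀, map_div₀, eq_div_iff h2.ne']
    obtain ⟨d, rfl⟩ := Nat.exists_eq_add_of_lt hij
    have : i + d + 1 - i = d + 1 := by omega
    rw [this]
    have h4 : a y ^ i ≠ 0 := (pow_pos h3 i).ne'
    apply mul_right_cancel₀ h4
    rw [← he]; ring
  rcases lt_or_gt_of_ne hji with h | h
  · exact main j i h hj hi he.symm
  · exact main i j h hi hj he

theorem residue_inv (w : L) (hw : a w = 1) :
    ∃ θ : K[X], (∀ i, a (algebraMap K L (θ.coeff i)) ≤ 1) ∧ a (aeval w θ * w - 1) < 1 := by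
  have hyint : IsIntegral K w := Algebra.IsIntegral.isIntegral w
  set p := minpoly K w with hp
  have hp0 : p ≠ 0 := minpoly.ne_zero hyint
  have hpw : aeval w p = 0 := minpoly.aeval K w
  obtain ⟨i0, hi0, hmax0⟩ := Finset.exists_max_image p.support
    (fun i => a (algebraMap K L (p.coeff i))) (by simpa using hp0)
  have hmax1 : ∀ i, a (algebraMap K L (p.coeff i)) ≤ a (algebraMap K L (p.coeff i0)) := by
    intro i
    by_cases hi : i ∈ p.support
    · exact hmax0 i hi
    · rw [notMem_support_iff.1 hi]; simp
  classical
  have hex : ∃ i, a (algebraMap K L (p.coeff i)) = a (algebraMap K L (p.coeff i0)) := ⟨i0, rfl⟩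
  set i := Nat.find hex with hidef
  have hi := Nat.find_spec hex
  have hlow : ∀ j < i, a (algebraMap K L (p.coeff j)) < a (algebraMap K L (p.coeff i)) := by
    intro j hj
    have := Nat.find_min hex hj
    exact lt_of_le_of_ne ((hmax1 j).trans hi.symm.le) (by rw [hi]; exact this)
  have hmax : ∀ j, a (algebraMap K L (p.coeff j)) ≤ a (algebraMap K L (p.coeff i)) :=
    fun j => (hmax1 j).trans hi.symm.le
  have hci : p.coeff i ≠ 0 := by
    intro h
    have h2 : a (algebraMap K L (p.coeff i0)) = 0 := by
      rw [← hi]; change a (algebraMap K L (p.coeff i)) = 0; rw [h]; simp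
    have : p.coeff i0 = 0 := by simpa using h2
    exact (mem_support_iff.1 hi0) this
  have hci2 : 0 < a (algebraMap K L (p.coeff i)) := a.pos (by simpa using hci)
  let c : ℕ → K := fun j => p.coeff j / p.coeff i
  have hc : ∀ j, a (algebraMap K L (c j)) ≤ 1 := by
    intro j
    simp only [c, map_div₀]
    rw [div_le_one hci2]; exact hmax j
  have hc' : ∀ j < i, a (algebraMap K L (c j)) < 1 := by
    intro j hj
    simp only [c, map_div₀]
    rw [div_lt_one hci2]; exact hlow j hj
  let m := p.natDegree + 1
  have hs : ∑ j ∈ Finset.range (i + (1 + m)), algebraMap K L (c j) * w ^ j = 0 := by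
    have h1 := aeval_eq_sum_range' (p := p) (n := i + (1 + m)) (by omega) w
    rw [hpw] at h1
    have h2 : ∑ j ∈ Finset.range (i + (1 + m)), algebraMap K L (c j) * w ^ j
        = (∑ j ∈ Finset.range (i + (1 + m)), p.coeff j • w ^ j) / algebraMap K L (p.coeff i) := by
      rw [Finset.sum_div]
      refine Finset.sum_congr rfl fun j _ => ?_
      simp only [c, map_div₀, Algebra.smul_def]; ring
    rw [h2, ← h1, zero_div]
  let θ : K[X] := -∑ j ∈ Finset.range m, monomial j (c (i + (1 + j)))
  have hθc : ∀ k, a (algebraMap K L (θ.coeff k)) ≤ 1 := by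
    intro k
    simp only [θ, coeff_neg, finsetSum_coeff, coeff_monomial, Finset.sum_ite_eq', map_neg]
    split_ifs
    · simpa using hc _
    · simp
  refine ⟨θ, hθc, ?_⟩
  have hθw : aeval w θ = -∑ j ∈ Finset.range m, algebraMap K L (c (i + (1 + j))) * w ^ j := by
    simp [θ, aeval_monomial]
  rw [Finset.sum_range_add, Finset.sum_range_add] at hs
  have hci1 : c i = 1 := div_self hci
  have hlast : ∑ j ∈ Finset.range m, algebraMap K L (c (i + (1 + j))) * w ^ (i + (1 + j))
      = - (aeval w θ * w) * w ^ i := by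
    rw [hθw, neg_mul (∑ j ∈ _, _), neg_neg, Finset.sum_mul, Finset.sum_mul]
    refine Finset.sum_congr rfl fun j _ => ?_
    rw [pow_add, pow_add]; ring
  rw [hlast] at hs
  simp only [Finset.sum_range_one, add_zero, hci1, map_one, one_mul] at hs
  have h5 : (aeval w θ * w - 1) * w ^ i = ∑ j ∈ Finset.range i, algebraMap K L (c j) * w ^ j := by
    linear_combination -hs
  have h6 : a (aeval w θ * w - 1) = a (∑ j ∈ Finset.range i, algebraMap K L (c j) * w ^ j) := by
    rw [← h5, map_mul, map_pow, hw]; simp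
  rw [h6]
  rcases Nat.eq_zero_or_pos i with h0 | h0
  · rw [h0]; simp
  · obtain ⟨j, hj, hle⟩ := IsNonarchimedean.finset_image_add_of_nonempty (NA.na (a := a))
      (fun j => algebraMap K L (c j) * w ^ j) (t := Finset.range i) (by simpa using h0.ne')
    refine hle.trans_lt ?_
    rw [map_mul, map_pow, hw, one_pow, mul_one]
    exact hc' j (Finset.mem_range.1 hj)

end alg
end HCot

namespace HCot
open Polynomial

section key
variable {K L : Type*} [Field K] [Field L] [Algebra K L] [Algebra.IsAlgebraic K L]
  {a : AbsoluteValue L ℝ} [NA a] {x : L}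

/-- Key polynomial at `ρ`. -/
structure Key (a : AbsoluteValue L ℝ) (x : L) (ρ : ℝ) (P : K[X]) : Prop where
  monic : P.Monic
  pos : 0 < P.natDegree
  const : ∀ g : K[X], g ≠ 0 → g.natDegree < P.natDegree → Const a x ρ g
  not : ¬ Const a x ρ P

theorem natDegree_modByMonic_lt' {P : K[X]} (hP : P.Monic) (h : 0 < P.natDegree) (g : K[X]) :
    (g %ₘ P).natDegree < P.natDegree := by
  apply natDegree_modByMonic_lt g hP
  rintro rfl
  simp at h

theorem Key.add_eq {ρ : ℝ} (hρ : 0 < ρ) {P : K[X]} (hP : Key a x ρ P) (g0 h : K[X])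
    (hg : g0.natDegree < P.natDegree) :
    N a x ρ (g0 + P * h) = max (N a x ρ g0) (N a x ρ (P * h)) := by
  rcases lt_trichotomy (N a x ρ g0) (N a x ρ (P * h)) with hlt | heq | hlt
  · rw [max_eq_right hlt.le, add_comm, N_add_eq a x hρ _ _ hlt]
  · by_cases h0 : g0 = 0
    · rw [h0, zero_add, N_zero, max_eq_right (N_nonneg a x hρ.le _)]
    have hc := hP.const g0 h0 hg
    apply le_antisymm (N_add a x hρ.le _ _)
    rw [← heq, max_self]
    by_contra hlt
    push Not at hlt
    apply hP.not
    apply Const.of_mul hρ (h := h)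
    have : P * h = (-1 : K[X]) * g0 + (g0 + P * h) := by ring
    rw [this]
    have hc1 : Const a x ρ ((-1 : K[X]) * g0) := by
      have : (-1 : K[X]) = C (-1) := by simp
      rw [this]
      exact (const_C (by simp)).mul hρ hc
    apply hc1.add_small hρ
    rw [← hc1.eq hρ.le, neg_one_mul, N_neg a x hρ]
    exact hlt
  · rw [max_eq_left hlt.le, N_add_eq a x hρ _ _ hlt]

theorem Key.eq_max {ρ : ℝ} (hρ : 0 < ρ) {P : K[X]} (hP : Key a x ρ P) (g : K[X]) :
    N a x ρ g = max (N a x ρ (g %ₘ P)) (N a x ρ P * N a x ρ (g /ₘ P)) := by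
  rw [← N_mul a x hρ, ← hP.add_eq hρ _ _ (natDegree_modByMonic_lt' hP.monic hP.pos g),
    modByMonic_add_div g]

theorem natDegree_div_lt {P : K[X]} (hP : P.Monic) (h : 0 < P.natDegree) {g : K[X]}
    (hg : 0 < g.natDegree) : (g /ₘ P).natDegree < g.natDegree := by
  rw [natDegree_divByMonic g hP]; omega

theorem Key.induction {ρ : ℝ} {P : K[X]} (hP : Key a x ρ P) {M : K[X] → Prop}
    (h0 : ∀ g, g.natDegree < P.natDegree → M g)
    (h1 : ∀ g, M (g %ₘ P) → M (g /ₘ P) → M g) (g : K[X]) : M g := by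
  induction hn : g.natDegree using Nat.strong_induction_on generalizing g with
  | _ n ih =>
    by_cases hlt : g.natDegree < P.natDegree
    · exact h0 g hlt
    · apply h1 g (h0 _ (natDegree_modByMonic_lt' hP.monic hP.pos g))
      exact ih _ (hn ▸ natDegree_div_lt hP.monic hP.pos (by have := hP.pos; omega)) _ rfl

theorem Key.expand {ρ : ℝ} (hρ : 0 < ρ) {P : K[X]} (hP : Key a x ρ P) (W : AddSubmonoid K[X])
    (hW : ∀ (g : K[X]) (i : ℕ), g ≠ 0 → g.natDegree < P.natDegree → vv a x g * N a x ρ P ^ i ≤ 1 →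
      g * P ^ i ∈ W) (g : K[X]) (hg : N a x ρ g ≤ 1) : g ∈ W := by
  have key : ∀ (g : K[X]) (i : ℕ), N a x ρ g * N a x ρ P ^ i ≤ 1 → g * P ^ i ∈ W := by
    intro g
    induction g using hP.induction with
    | h0 g hlt =>
      intro i hi
      by_cases h0 : g = 0
      · rw [h0, zero_mul]; exact zero_mem _
      · rw [(hP.const g h0 hlt).eq hρ.le] at hi
        exact hW g i h0 hlt hi
    | h1 g h1 h2 =>
      intro i hi
      have hp := N_nonneg a x hρ.le P
      rw [hP.eq_max hρ] at hi
      have hi1 : N a x ρ (g %ₘ P) * N a x ρ P ^ i ≤ 1 := le_trans (by gcongr; simp) hi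
      have hi2 : N a x ρ (g /ₘ P) * N a x ρ P ^ (i + 1) ≤ 1 := by
        refine le_trans ?_ hi
        rw [pow_succ', ← mul_assoc, mul_comm (N a x ρ (g /ₘ P))]
        gcongr; simp
      have e : g * P ^ i = (g %ₘ P) * P ^ i + (g /ₘ P) * P ^ (i + 1) := by
        conv_lhs => rw [← modByMonic_add_div g P]
        ring
      rw [e]
      exact add_mem (h1 i hi1) (h2 (i + 1) hi2)
  simpa using key g 0 (by simpa using hg)

/-- Good polynomial. -/
def Good (a : AbsoluteValue L ℝ) (x : L) (ρ : ℝ) (P : K[X]) : Prop :=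
  Key a x ρ P ∧ ∃ c : K, c ≠ 0 ∧ N a x ρ P = a (algebraMap K L c)

theorem Good.value {ρ : ℝ} (hρ : 0 < ρ) {P : K[X]} (hP : Good a x ρ P) (s : K[X]) (hs : s ≠ 0) :
    ∃ h : K[X], Const a x ρ h ∧ vv a x h = N a x ρ s := by
  obtain ⟨hP, c, hc, hPc⟩ := hP
  revert hs
  induction s using hP.induction with
  | h0 g hlt => exact fun h0 => ⟨g, hP.const g h0 hlt, ((hP.const g h0 hlt).eq hρ.le).symm⟩
  | h1 g h1 h2 =>
    intro h0
    have hpos := N_pos a x hρ h0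
    have hm := hP.eq_max hρ g
    rcases max_choice (N a x ρ (g %ₘ P)) (N a x ρ P * N a x ρ (g /ₘ P)) with h | h
    · rw [h] at hm
      obtain ⟨u, hu, hu2⟩ := h1 (by intro h3; rw [h3, N_zero] at hm; linarith)
      exact ⟨u, hu, by rw [hu2, hm]⟩
    · rw [h] at hm
      obtain ⟨u, hu, hu2⟩ := h2 (by intro h3; rw [h3, N_zero, mul_zero] at hm; linarith)
      exact ⟨C c * u, (const_C hc).mul hρ hu, by rw [vv_mul, vv_C, hu2, hm, hPc]⟩

theorem Const.inv {ρ : ℝ} (hρ : 0 < ρ) {h : K[X]} (hc : Const a x ρ h) :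
    ∃ h' : K[X], Const a x ρ h' ∧ vv a x h' = (vv a x h)⁻¹ := by
  have hpos := hc.pos hρ
  have h0 : aeval x h ≠ 0 := by
    intro h0; simp [vv, h0] at hpos
  obtain ⟨k, hk, c, hc0, he⟩ := torsion (K := K) a (aeval x h) h0
  refine ⟨C c⁻¹ * h ^ (k - 1), (const_C (inv_ne_zero hc0)).mul hρ (hc.pow hρ _), ?_⟩
  rw [vv_mul, vv_pow, vv_C, map_inv₀, map_inv₀, ← he]
  change (vv a x h ^ k)⁻¹ * _ = _
  obtain ⟨m, rfl⟩ := Nat.exists_eq_succ_of_ne_zero hk.ne'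
  simp only [Nat.succ_eq_add_one, Nat.add_sub_cancel]
  field_simp
  ring

theorem exists_good {ρ0 : ℝ} (hdense : ∀ α β : ℝ, 0 < α → α < β →
      ∃ c : K, α < a (algebraMap K L c) ∧ a (algebraMap K L c) < β)
    {g0 : K[X]} (hg0 : g0 ≠ 0) {ρ1 : ℝ} (h1 : 0 < ρ1) (h10 : ρ1 < ρ0) (hn : ¬ Const a x ρ1 g0) :
    ∃ (P : K[X]) (ρ' : ℝ), Good a x ρ' P ∧ ρ' < ρ0 ∧ P.natDegree ≤ g0.natDegree ∧
      ∃ ρ2, 0 < ρ2 ∧ ρ2 < ρ' ∧ ¬ Const a x ρ2 P := by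
  classical
  let Q : ℕ → Prop := fun n => ∃ g : K[X], g ≠ 0 ∧ g.natDegree = n ∧
    ∃ r, 0 < r ∧ r < ρ0 ∧ ¬ Const a x r g
  have hQ : ∃ n, Q n := ⟨_, g0, hg0, rfl, ρ1, h1, h10, hn⟩
  obtain ⟨g, hg, hgn, r, hr, hr0, hgr⟩ := Nat.find_spec hQ
  have hlc : g.leadingCoeff⁻¹ ≠ 0 := inv_ne_zero (leadingCoeff_ne_zero.2 hg)
  set P : K[X] := g * C g.leadingCoeff⁻¹ with hPdef
  have hPm : P.Monic := monic_mul_leadingCoeff_inv hg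
  have hPd : P.natDegree = g.natDegree := natDegree_mul_C hlc
  have hPr : ¬ Const a x r P := fun h => hgr (h.of_mul hr)
  obtain ⟨r2, hr2, hr20⟩ := exists_between hr0
  have hlt := not_const_lt hr hr2 hPm.ne_zero hPr
  obtain ⟨c, hc1, hc2⟩ := hdense _ _ (N_pos a x hr hPm.ne_zero) hlt
  obtain ⟨ρ', hρ', he⟩ := intermediate_value_Ioo hr2.le (N_cont a x P).continuousOn
    (Set.mem_Ioo.2 ⟨hc1, hc2⟩)
  have hPρ' : ¬ Const a x ρ' P := fun h => hPr (h.of_le hρ'.1.le)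
  refine ⟨P, ρ', ⟨⟨hPm, ?_, ?_, hPρ'⟩, c, ?_, he⟩, hρ'.2.trans hr20, ?_, r, hr, hρ'.1, hPr⟩
  · by_contra h0
    have h0 : P.natDegree = 0 := by omega
    rw [eq_C_of_natDegree_eq_zero h0] at hPr
    apply hPr
    apply const_C
    intro h3
    rw [eq_C_of_natDegree_eq_zero h0, h3, C_0] at hPm
    exact hPm.ne_zero rfl
  · intro q hq hqd
    by_contra hqc
    exact Nat.find_min hQ (m := q.natDegree) (by rw [← hgn, ← hPd]; exact hqd)
      ⟨q, hq, rfl, ρ', hr.trans hρ'.1, hρ'.2.trans hr20, hqc⟩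
  · rintro rfl
    have := N_pos a x hr hPm.ne_zero
    simp at hc1; linarith
  · rw [hPd, hgn]
    exact Nat.find_le ⟨g0, hg0, rfl, ρ1, h1, h10, hn⟩

/-- the subring of polynomials with norm at most one -/
def Rr (a : AbsoluteValue L ℝ) [NA a] (x : L) (ρ : ℝ) (hρ : 0 < ρ) : Subring K[X] where
  carrier := {g | N a x ρ g ≤ 1}
  mul_mem' := by
    intro g h hg hh
    simp only [Set.mem_ofPred_eq] at *
    rw [N_mul a x hρ]
    exact mul_le_one₀ hg (N_nonneg a x hρ.le _) hh
  one_mem' := by simp [N_one]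
  add_mem' := by
    intro g h hg hh
    exact (N_add a x hρ.le g h).trans (max_le hg hh)
  zero_mem' := by simp [N_zero]
  neg_mem' := by
    intro g hg
    simp only [Set.mem_ofPred_eq] at *
    rw [N_neg a x hρ]; exact hg

theorem mem_Rr {ρ : ℝ} {hρ : 0 < ρ} {g : K[X]} : g ∈ Rr a x ρ hρ ↔ N a x ρ g ≤ 1 := Iff.rfl

/-- evaluation ring homomorphism -/
abbrev phi (K : Type*) {L : Type*} [Field K] [Field L] [Algebra K L] (x : L) : K[X] →+* L :=
  (aeval x : K[X] →ₐ[K] L).toRingHom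

theorem adj_Rr {ρ : ℝ} (hρ : 0 < ρ) (B : Subring L) (hB : ∀ y, y ∈ B ↔ a y ≤ 1) (s h h2 : K[X])
    (hs1 : 1 ≤ N a x ρ s) (hs2 : vv a x s ≤ 1) (hh : Const a x ρ h) (hh2 : Const a x ρ h2)
    (e1 : vv a x h = (N a x ρ s)⁻¹) (e2 : vv a x h2 = N a x ρ s)
    (F0 : MvPolynomial B (Rr (K := K) a x ρ hρ))
    (hF : MvPolynomial.map (Subring.subtype _) F0 ∈ J2 (phi K x) B (adj (Rr a x ρ hρ) s)) :
    MvPolynomial.map (Subring.subtype _) F0 ∈ J2 (phi K x) B (Rr a x ρ hρ) := by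
  have hspos : 0 < N a x ρ s := lt_of_lt_of_le one_pos hs1
  have hs0 : s ≠ 0 := by rintro rfl; rw [N_zero] at hspos; linarith
  have hinv : (N a x ρ s)⁻¹ ≤ 1 := inv_le_one_of_one_le₀ hs1
  have nh : N a x ρ h = (N a x ρ s)⁻¹ := by rw [hh.eq hρ.le, e1]
  have nh2 : N a x ρ h2 = N a x ρ s := by rw [hh2.eq hρ.le, e2]
  let hS : Rr (K := K) a x ρ hρ := ⟨h, by rw [mem_Rr, nh]; exact hinv⟩
  let kS : Rr (K := K) a x ρ hρ := ⟨h * s, by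
    rw [mem_Rr, N_mul a x hρ, nh, inv_mul_cancel₀ hspos.ne']⟩
  let eS : Rr (K := K) a x ρ hρ := ⟨h * h2, by
    rw [mem_Rr, N_mul a x hρ, nh, nh2, inv_mul_cancel₀ hspos.ne']⟩
  have hsB : phi K x s ∈ B := (hB _).2 hs2
  have hae : a (phi K x (h * h2)) = 1 := by
    change vv a x (h * h2) = 1
    rw [vv_mul, e1, e2, inv_mul_cancel₀ hspos.ne']
  have hne : phi K x (h * h2) ≠ 0 := by
    intro h0; rw [h0] at hae; simp at hae
  let bS : B := ⟨(phi K x (h * h2))⁻¹, by rw [hB, map_inv₀, hae, inv_one]⟩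
  refine adj_lemma (φ := phi K x) (Rr a x ρ hρ) s ⟨_, hsB⟩ rfl hS kS rfl (Or.inr ?_) ?_ F0 hF
  · intro h0
    have : vv a x h = 0 := by
      change a (phi K x h) = 0
      change phi K x h = 0 at h0
      rw [h0, map_zero]
    rw [e1] at this
    exact (inv_pos.2 hspos).ne' this
  · intro z hz
    let zE : Polynomial K[X] := z.map (Subring.subtype _)
    have hzE : zE.IsRoot s := by
      rw [IsRoot, eval_map]; exact hz
    obtain ⟨u, hu⟩ := dvd_iff_isRoot.2 hzE
    have hzc : ∀ k, N a x ρ (zE.coeff k) ≤ 1 := by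
      intro k
      simp only [zE, coeff_map]
      exact (z.coeff k).2
    have huk : ∀ k, N a x ρ (u.coeff k) ≤ (N a x ρ s)⁻¹ := by
      intro k
      induction k with
      | zero =>
        have h3 : zE.coeff 0 = - (s * u.coeff 0) := by
          rw [hu]; simp [mul_coeff_zero]
        have h4 := hzc 0
        rw [h3, N_neg a x hρ, N_mul a x hρ] at h4
        rwa [← one_div, le_div_iff₀ hspos, mul_comm]
      | succ k ih =>
        have h3 : s * u.coeff (k + 1) = u.coeff k - zE.coeff (k + 1) := by
          rw [hu, sub_mul, coeff_sub, coeff_X_mul, coeff_C_mul]; ring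
        have h4 := N_sub a x hρ (u.coeff k) (zE.coeff (k + 1))
        rw [← h3, N_mul a x hρ] at h4
        have h5 : N a x ρ s * N a x ρ (u.coeff (k + 1)) ≤ 1 :=
          h4.trans (max_le (ih.trans hinv) (hzc _))
        rwa [← one_div, le_div_iff₀ hspos, mul_comm]
    let wE : Polynomial K[X] := C h2 * u
    have hw : wE ∈ Set.range (Polynomial.map (Subring.subtype (Rr (K := K) a x ρ hρ))) := by
      have h6 : wE ∈ Polynomial.lifts (Subring.subtype (Rr (K := K) a x ρ hρ)) := by
        rw [Polynomial.lifts_iff_coeff_lifts]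
        intro k
        refine ⟨⟨h2 * u.coeff k, ?_⟩, ?_⟩
        · rw [mem_Rr, N_mul a x hρ, nh2]
          calc _ ≤ N a x ρ s * (N a x ρ s)⁻¹ := by gcongr; exact huk k
            _ = 1 := mul_inv_cancel₀ hspos.ne'
        · simp [wE, coeff_C_mul]
      exact (Polynomial.mem_lifts _).1 h6
    obtain ⟨w, hw⟩ := hw
    refine ⟨eS, bS, w, mul_inv_cancel₀ hne, ?_⟩
    apply Polynomial.map_injective (Subring.subtype (Rr (K := K) a x ρ hρ))
      Subtype.coe_injective
    have hzz : z.map (Subring.subtype (Rr (K := K) a x ρ hρ)) = (X - C s) * u := hu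
    simp only [Polynomial.map_mul, Polynomial.map_sub, map_C, map_X, hw, hzz, wE]
    simp only [hS, kS, eS, Subring.subtype_apply, C_mul]
    ring

end key
end HCot

namespace HCot
open Polynomial Filter

section descent
variable {K L : Type*} [Field K] [Field L] [Algebra K L] [Algebra.IsAlgebraic K L]
  {a : AbsoluteValue L ℝ} [NA a] {x : L}

/-- approximate inverses with good norm slightly above `α` -/
theorem Const.approx_inv {α : ℝ} (hα : 0 < α) {g : K[X]} (hg : Const a x α g) :
    ∃ H : K[X], (∃ ρ1, α < ρ1 ∧ N a x ρ1 H ≤ (vv a x g)⁻¹) ∧ N a x α (H * g - 1) < 1 := by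
  obtain ⟨H, hH, hHv⟩ := hg.inv hα
  have hpos := hg.pos hα
  have hε := hH.mul hα hg
  have hv : vv a x (H * g) = 1 := by rw [vv_mul, hHv, inv_mul_cancel₀ hpos.ne']
  obtain ⟨ρ1, ⟨hc1, hc2⟩, h1⟩ := ((hH.eventually.and hε.eventually).and
    (eventually_mem_nhdsWithin)).exists
  have h1 : α < ρ1 := h1
  have hρ1 : 0 < ρ1 := hα.trans h1
  obtain ⟨θ, hθ, hθ2⟩ := residue_inv (K := K) a (aeval x (H * g)) hv
  have hεm : H * g ∈ Rr (K := K) a x ρ1 hρ1 := by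
    rw [mem_Rr, hc2.eq hρ1.le, hv]
  have hT : θ.comp (H * g) ∈ Rr (K := K) a x ρ1 hρ1 := by
    rw [comp, eval₂_eq_sum]
    refine sum_mem fun i _ => mul_mem ?_ (pow_mem hεm i)
    rw [mem_Rr, N_C]; exact hθ i
  refine ⟨H * θ.comp (H * g), ⟨ρ1, h1, ?_⟩, ?_⟩
  · rw [N_mul a x hρ1, hc1.eq hρ1.le, hHv]
    exact mul_le_of_le_one_right (inv_nonneg.2 hpos.le) hT
  · apply N_lt_one_of hα h1
    · have e : H * θ.comp (H * g) * g - 1 = θ.comp (H * g) * (H * g) - 1 := by ring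
      rw [e]
      exact sub_mem (mul_mem hT hεm) (one_mem (Rr (K := K) a x ρ1 hρ1))
    · rw [show H * θ.comp (H * g) * g - 1 = θ.comp (H * g) * (H * g) - 1 by ring]
      simp only [vv, map_sub, map_mul, map_one, aeval_comp] at *
      exact hθ2

variable (a x) in
/-- Total version of `Rr`. -/
def TT (ρ : ℝ) : Subring K[X] := if h : 0 < ρ then Rr a x ρ h else ⊤

theorem TT_eq {ρ : ℝ} (h : 0 < ρ) : TT (K := K) a x ρ = Rr a x ρ h := by
  unfold TT; rw [dif_pos h]

theorem mem_TT {ρ : ℝ} (h : 0 < ρ) {g : K[X]} : g ∈ TT (K := K) a x ρ ↔ N a x ρ g ≤ 1 := by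
  rw [TT_eq h]; rfl

variable {B : Subring L} {R : Type*} [CommRing R] {ι : R →+* K} {FA : MvPolynomial B R}

variable (x ι FA) in
/-- the property that the fixed polynomial lies in the square ideal over `S` -/
def ZZ (S : Subring K[X]) : Prop := MvPolynomial.map (C.comp ι) FA ∈ J2 (phi K x) B S

theorem adj_step (hB : ∀ y, y ∈ B ↔ a y ≤ 1) (hι : ∀ r, a (algebraMap K L (ι r)) ≤ 1)
    {ρ : ℝ} (hρ : 0 < ρ) (s h2 : K[X])
    (hs1 : 1 ≤ N a x ρ s) (hs2 : vv a x s ≤ 1) (hh2 : Const a x ρ h2)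
    (e2 : vv a x h2 = N a x ρ s)
    (hZ : ZZ x ι FA (adj (TT a x ρ) s)) : ZZ x ι FA (TT a x ρ) := by
  rw [TT_eq hρ] at hZ ⊢
  obtain ⟨h, hh, e1⟩ := hh2.inv hρ
  rw [e2] at e1
  let i' : R →+* Rr (K := K) a x ρ hρ := (C.comp ι).codRestrict _ (fun r => by
    rw [mem_Rr]; simp only [RingHom.comp_apply]; rw [N_C]; exact hι r)
  have e : MvPolynomial.map (C.comp ι) FA =
      MvPolynomial.map (Subring.subtype _) (MvPolynomial.map i' FA) := by
    rw [MvPolynomial.map_map]; rfl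
  unfold ZZ at hZ ⊢
  rw [e] at hZ ⊢
  exact adj_Rr hρ B hB s h h2 hs1 hs2 hh hh2 e1 e2 _ hZ

theorem tail (hB : ∀ y, y ∈ B ↔ a y ≤ 1) (hι : ∀ r, a (algebraMap K L (ι r)) ≤ 1)
    {α : ℝ} (hα : 0 ≤ α) {d : ℕ} (s : K[X]) (hs1 : 1 ≤ N a x α s) (hs2 : vv a x s ≤ 1)
    (S : Subring K[X])
    (hS : ∀ g ∈ S, ∀ᶠ ρ' in nhdsWithin α (Set.Ioi α), g ∈ adj (TT a x ρ') s)
    (hfreq : ∀ ρ0, α < ρ0 → ∃ (P : K[X]) (ρ' : ℝ), α < ρ' ∧ ρ' < ρ0 ∧ Good a x ρ' P ∧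
      P.natDegree < d)
    (hZ : ZZ x ι FA S) :
    ∃ (P : K[X]) (ρ' : ℝ), 0 < ρ' ∧ Good a x ρ' P ∧ P.natDegree < d ∧ ZZ x ι FA (TT a x ρ') := by
  have h1 := J2_union hS hZ
  obtain ⟨ρ0, h0, h2⟩ := (mem_nhdsGT_iff_exists_Ioo_subset).1 h1
  obtain ⟨P, ρ', hα', h0', hP, hd⟩ := hfreq ρ0 h0
  have hρ' : 0 < ρ' := lt_of_le_of_lt hα hα'
  have hN : 1 ≤ N a x ρ' s := hs1.trans (N_mono a x hα hα'.le s)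
  obtain ⟨h, hh, e⟩ := hP.value hρ' s (by rintro rfl; rw [N_zero] at hN; linarith)
  exact ⟨P, ρ', hρ', hP, hd, adj_step hB hι hρ' s h hN hs2 hh e (h2 ⟨hα', h0'⟩)⟩

/-- additive submonoid of eventual members -/
def evm (l : Filter ℝ) (T : ℝ → Subring K[X]) : AddSubmonoid K[X] where
  carrier := {g | ∀ᶠ r in l, g ∈ T r}
  zero_mem' := Eventually.of_forall fun r => zero_mem _
  add_mem' := by
    intro g h hg hh
    filter_upwards [hg, hh] with r h1 h2
    exact add_mem h1 h2

theorem mem_evm {l : Filter ℝ} {T : ℝ → Subring K[X]} {g : K[X]} :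
    g ∈ evm l T ↔ ∀ᶠ r in l, g ∈ T r := Iff.rfl

theorem eventually_TT {α : ℝ} (hα : 0 < α) {g : K[X]} (hg : N a x α g < 1) :
    ∀ᶠ ρ' in nhdsWithin α (Set.Ioi α), g ∈ TT (K := K) a x ρ' := by
  have h1 : ∀ᶠ ρ' in nhdsWithin α (Set.Ioi α), N a x ρ' g < 1 :=
    (((N_cont a x g).tendsto α).eventually_lt_const hg).filter_mono nhdsWithin_le_nhds
  filter_upwards [h1, eventually_mem_nhdsWithin] with ρ' h2 h3
  rw [mem_TT (hα.trans h3)]; exact h2.le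

theorem Const.eventually_TT {α : ℝ} (hα : 0 < α) {g : K[X]} (hg : Const a x α g)
    (hg1 : vv a x g ≤ 1) :
    ∀ᶠ ρ' in nhdsWithin α (Set.Ioi α), g ∈ TT (K := K) a x ρ' := by
  filter_upwards [hg.eventually, eventually_mem_nhdsWithin] with ρ' h2 h3
  have h3 : 0 < ρ' := hα.trans h3
  rw [mem_TT h3, h2.eq h3.le]; exact hg1

theorem caseA (hB : ∀ y, y ∈ B ↔ a y ≤ 1) (hι : ∀ r, a (algebraMap K L (ι r)) ≤ 1)
    {ρ α : ℝ} (hρ : 0 < ρ) (hρα : ρ ≤ α) {Q : K[X]} (hQ : Good a x ρ Q)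
    (hc : ∀ g : K[X], g ≠ 0 → g.natDegree < Q.natDegree → Const a x α g)
    (hfreq : ∀ ρ0, α < ρ0 → ∃ (P : K[X]) (ρ' : ℝ), α < ρ' ∧ ρ' < ρ0 ∧ Good a x ρ' P ∧
      P.natDegree < Q.natDegree)
    (hZ : ZZ x ι FA (TT a x ρ)) :
    ∃ (P : K[X]) (ρ' : ℝ), 0 < ρ' ∧ Good a x ρ' P ∧ P.natDegree < Q.natDegree ∧
      ZZ x ι FA (TT a x ρ') := by
  obtain ⟨hQ, c, hc0, hQc⟩ := hQ
  have hα : 0 < α := hρ.trans_le hρα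
  have hac : 0 < a (algebraMap K L c) := a.pos (by simpa using hc0)
  have hs : N a x ρ (C c⁻¹ * Q) = 1 := by
    rw [N_mul a x hρ, N_C, hQc, map_inv₀, map_inv₀, inv_mul_cancel₀ hac.ne']
  refine tail hB hι hα.le (C c⁻¹ * Q) (hs.ge.trans (N_mono a x hρ.le hρα _))
    ((vv_le_N a x hρ.le _).trans hs.le) (TT a x ρ) ?_ hfreq hZ
  intro g hg
  rw [mem_TT hρ] at hg
  refine (hQ.expand hρ (evm (nhdsWithin α (Set.Ioi α)) fun ρ' => adj (TT a x ρ') (C c⁻¹ * Q))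
    ?_ g hg)
  intro g i hg0 hgd hgi
  rw [mem_evm]
  have e : g * Q ^ i = (g * C c ^ i) * (C c⁻¹ * Q) ^ i := by
    rw [mul_pow, ← C_pow, ← C_pow, inv_pow]
    have : C (c ^ i) * C (c ^ i)⁻¹ = (1 : K[X]) := by
      rw [← C_mul, mul_inv_cancel₀ (pow_ne_zero _ hc0), C_1]
    linear_combination (-(g * Q ^ i)) * this
  have h1 : Const a x α (g * C c ^ i) := (hc g hg0 hgd).mul hα ((const_C hc0).pow hα i)
  have h2 : vv a x (g * C c ^ i) ≤ 1 := by
    rw [vv_mul, vv_pow, vv_C, ← hQc]; exact hgi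
  filter_upwards [h1.eventually_TT hα h2] with ρ' h3
  rw [e]
  exact mul_mem (le_adj _ _ h3) (pow_mem (mem_adj _ _) i)

end descent
end HCot

namespace HCot
open Polynomial Filter

section descent
variable {K L : Type*} [Field K] [Field L] [Algebra K L] [Algebra.IsAlgebraic K L]
  {a : AbsoluteValue L ℝ} [NA a] {x : L}
variable {B : Subring L} {R : Type*} [CommRing R] {ι : R →+* K} {FA : MvPolynomial B R}

theorem caseB1 (hB : ∀ y, y ∈ B ↔ a y ≤ 1) (hι : ∀ r, a (algebraMap K L (ι r)) ≤ 1)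
    {ρ α : ℝ} (hρ : 0 < ρ) (hρα : ρ < α) {Q P : K[X]} (hQ : Good a x ρ Q)
    (hc : ∀ g : K[X], g.natDegree < Q.natDegree → N a x α g = vv a x g)
    (hP : Key a x α P) (hPQ : P.natDegree < Q.natDegree)
    (hZ : ZZ x ι FA (TT a x ρ)) : ZZ x ι FA (TT a x α) := by
  obtain ⟨hQ, c, hc0, hQc⟩ := hQ
  have hα : 0 < α := hρ.trans hρα
  have hac : 0 < a (algebraMap K L c) := a.pos (by simpa using hc0)
  have hs : N a x ρ (C c⁻¹ * Q) = 1 := by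
    rw [N_mul a x hρ, N_C, hQc, map_inv₀, map_inv₀, inv_mul_cancel₀ hac.ne']
  have hQ0 := hQ.monic.ne_zero
  have hh2 : ∃ h2 : K[X], Const a x α h2 ∧ vv a x h2 = N a x α (C c⁻¹ * Q) := by
    have hpos := N_pos a x hα hQ0
    have hm := hP.eq_max hα Q
    rcases le_or_gt (N a x α P * N a x α (Q /ₘ P)) (N a x α (Q %ₘ P)) with h | h
    · rw [max_eq_left h] at hm
      have h0 : Q %ₘ P ≠ 0 := by
        intro h0; rw [h0, N_zero] at hm; linarith
      have hcc := hP.const _ h0 (natDegree_modByMonic_lt' hP.monic hP.pos Q)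
      refine ⟨C c⁻¹ * (Q %ₘ P), (const_C (inv_ne_zero hc0)).mul hα hcc, ?_⟩
      rw [vv_mul, N_mul a x hα, vv_C, N_C, hm, hcc.eq hα.le]
    · exfalso
      rw [max_eq_right h.le, hc P hPQ, hc _ (natDegree_div_lt hP.monic hP.pos hQ.pos)] at hm
      rw [hc P hPQ, hc _ (natDegree_div_lt hP.monic hP.pos hQ.pos)] at h
      have h3 : vv a x Q = vv a x (P * (Q /ₘ P)) := by
        conv_lhs => rw [← modByMonic_add_div Q P, add_comm]
        apply vv_add_eq
        rw [vv_mul]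
        exact (vv_le_N a x hα.le _).trans_lt h
      rw [vv_mul, ← hm] at h3
      have h4 := not_const_lt hρ hρα hQ0 hQ.not
      have h5 := vv_le_N a x hρ.le Q
      linarith
  obtain ⟨h2, hh2, e2⟩ := hh2
  refine adj_step hB hι hα (C c⁻¹ * Q) h2 (hs.ge.trans (N_mono a x hρ.le hρα.le _))
    ((vv_le_N a x hρ.le _).trans hs.le) hh2 e2 (J2_mono ?_ hZ)
  intro g hg
  rw [mem_TT hρ] at hg
  refine (hQ.expand hρ (adj (TT a x α) (C c⁻¹ * Q)).toAddSubgroup.toAddSubmonoid ?_ g hg)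
  intro g i hg0 hgd hgi
  change _ ∈ adj (TT a x α) (C c⁻¹ * Q)
  have e : g * Q ^ i = (g * C c ^ i) * (C c⁻¹ * Q) ^ i := by
    rw [mul_pow, ← C_pow, ← C_pow, inv_pow]
    have : C (c ^ i) * C (c ^ i)⁻¹ = (1 : K[X]) := by
      rw [← C_mul, mul_inv_cancel₀ (pow_ne_zero _ hc0), C_1]
    linear_combination (-(g * Q ^ i)) * this
  rw [e]
  refine mul_mem (le_adj _ _ ?_) (pow_mem (mem_adj _ _) i)
  rw [mem_TT hα, N_mul a x hα, N_pow a x hα, N_C, hc g hgd, ← hQc]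
  exact hgi

theorem N_pow_sub_one {α : ℝ} (hα : 0 < α) {z : K[X]} (hz : N a x α (z - 1) < 1) (k : ℕ) :
    N a x α (z ^ k - 1) < 1 := by
  have hz1 : N a x α z ≤ 1 := by
    have : z = (z - 1) + 1 := by ring
    rw [this]
    refine (N_add a x hα.le _ _).trans (max_le hz.le (by rw [N_one]))
  induction k with
  | zero => simp [N_zero]
  | succ k ih =>
    have : z ^ (k + 1) - 1 = (z ^ k - 1) * z + (z - 1) := by ring
    rw [this]
    refine (N_add a x hα.le _ _).trans_lt (max_lt ?_ hz)
    rw [N_mul a x hα]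
    exact (mul_le_of_le_one_right (N_nonneg a x hα.le _) hz1).trans_lt ih

theorem caseB2 (hB : ∀ y, y ∈ B ↔ a y ≤ 1) (hι : ∀ r, a (algebraMap K L (ι r)) ≤ 1)
    {α : ℝ} (hα : 0 < α) {P : K[X]} {d : ℕ}
    (hP : Key a x α P) (hPv : N a x α P = vv a x P)
    (hfreq : ∀ ρ0, α < ρ0 → ∃ (P : K[X]) (ρ' : ℝ), α < ρ' ∧ ρ' < ρ0 ∧ Good a x ρ' P ∧
      P.natDegree < d)
    (hZ : ZZ x ι FA (TT a x α)) :
    ∃ (P : K[X]) (ρ' : ℝ), 0 < ρ' ∧ Good a x ρ' P ∧ P.natDegree < d ∧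
      ZZ x ι FA (TT a x ρ') := by
  classical
  set γ := vv a x P with hγ
  have hγ0 : 0 < γ := by rw [← hPv]; exact N_pos a x hα hP.monic.ne_zero
  have hex : ∃ k : ℕ, 0 < k ∧ ∃ g : K[X], Const a x α g ∧ vv a x g * γ ^ k = 1 := by
    have h0 : aeval x P ≠ 0 := by
      intro h0; simp [hγ, vv, h0] at hγ0
    obtain ⟨k, hk, c, hc0, he⟩ := torsion (K := K) a (aeval x P) h0
    refine ⟨k, hk, C c⁻¹, const_C (inv_ne_zero hc0), ?_⟩
    change γ ^ k = _ at he
    rw [vv_C, map_inv₀, map_inv₀, he, inv_mul_cancel₀]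
    rw [← he]; positivity
  obtain ⟨he0, g, hg, hge⟩ := Nat.find_spec hex
  have hmin : ∀ m, m < Nat.find hex → _ := fun m hm => Nat.find_min hex hm
  set e := Nat.find hex with hedef
  have hdvd : ∀ (g' : K[X]) (i : ℕ), Const a x α g' → vv a x g' * γ ^ i = 1 → e ∣ i := by
    intro g' i hg' h1
    by_contra hnd
    have hr : 0 < i % e := Nat.pos_of_ne_zero fun h => hnd (Nat.dvd_of_mod_eq_zero h)
    apply hmin (i % e) (Nat.mod_lt _ he0)
    obtain ⟨gb, hgb, hgbv⟩ := hg.inv hα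
    refine ⟨hr, g' * gb ^ (i / e), hg'.mul hα (hgb.pow hα _), ?_⟩
    have h2 : vv a x gb = γ ^ e := by
      rw [hgbv]; exact inv_eq_of_mul_eq_one_right hge
    rw [vv_mul, vv_pow, h2, mul_assoc, ← pow_mul, ← pow_add, Nat.div_add_mod]
    exact h1
  have hy1 : N a x α (g * P ^ e) = 1 := by
    rw [N_mul a x hα, N_pow a x hα, hg.eq hα.le, hPv, hge]
  refine tail hB hι hα.le (g * P ^ e) hy1.ge ((vv_le_N a x hα.le _).trans hy1.le) (TT a x α)
    ?_ hfreq hZ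
  intro f hf
  rw [mem_TT hα] at hf
  refine (hP.expand hα (evm (nhdsWithin α (Set.Ioi α)) fun ρ' => adj (TT a x ρ') (g * P ^ e))
    ?_ f hf)
  intro q i hq0 hqd hqi
  rw [mem_evm]
  rw [hPv] at hqi
  have hqc := hP.const q hq0 hqd
  rcases hqi.lt_or_eq with hlt | heq
  · have h1 : N a x α (q * P ^ i) < 1 := by
      rw [N_mul a x hα, N_pow a x hα, hqc.eq hα.le, hPv]; exact hlt
    filter_upwards [eventually_TT hα h1] with ρ' h3
    exact le_adj _ _ h3
  · obtain ⟨k, rfl⟩ := hdvd q i hqc heq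
    obtain ⟨H, ⟨ρ1, h1, hH⟩, hH2⟩ := hg.approx_inv hα
    have hgi : (vv a x g)⁻¹ = γ ^ e := inv_eq_of_mul_eq_one_right hge
    rw [hgi] at hH
    have id : q * P ^ (e * k) = (q * H ^ k) * (g * P ^ e) ^ k
        + -(q * ((H * g) ^ k - 1) * P ^ (e * k)) := by
      rw [mul_pow, mul_pow, pow_mul]; ring
    have hsmall : N a x α (-(q * ((H * g) ^ k - 1) * P ^ (e * k))) < 1 := by
      rw [N_neg a x hα, N_mul a x hα, N_mul a x hα, N_pow a x hα, hqc.eq hα.le, hPv,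
        mul_right_comm, heq, one_mul]
      exact N_pow_sub_one hα hH2 k
    filter_upwards [eventually_TT hα hsmall, hqc.eventually, Ioo_mem_nhdsGT h1] with ρ' h3 h4 h5
    have h0 : 0 < ρ' := hα.trans h5.1
    rw [id]
    refine add_mem (mul_mem (le_adj _ _ ?_) (pow_mem (mem_adj _ _) k)) (le_adj _ _ h3)
    rw [mem_TT h0, N_mul a x h0, N_pow a x h0, h4.eq h0.le, ← heq, pow_mul]
    have h6 : N a x ρ' H ≤ γ ^ e := (N_mono a x h0.le h5.2.le H).trans hH
    have h7 := N_nonneg a x h0.le H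
    have h8 := vv_nonneg a x q
    gcongr

theorem descent (hB : ∀ y, y ∈ B ↔ a y ≤ 1) (hι : ∀ r, a (algebraMap K L (ι r)) ≤ 1)
    (hdense : ∀ α β : ℝ, 0 < α → α < β →
      ∃ c : K, α < a (algebraMap K L c) ∧ a (algebraMap K L c) < β)
    {ρ : ℝ} (hρ : 0 < ρ) {Q : K[X]} (hQ : Good a x ρ Q) (hd : 1 < Q.natDegree)
    (hZ : ZZ x ι FA (TT a x ρ)) :
    ∃ (P : K[X]) (ρ' : ℝ), 0 < ρ' ∧ Good a x ρ' P ∧ P.natDegree < Q.natDegree ∧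
      ZZ x ι FA (TT a x ρ') := by
  classical
  let Bad : Set ℝ := {r | 0 < r ∧ ∃ g : K[X], g ≠ 0 ∧ g.natDegree < Q.natDegree ∧ ¬ Const a x r g}
  have hlow : ∀ r ∈ Bad, ρ < r := by
    rintro r ⟨hr, g, hg0, hgd, hgc⟩
    by_contra hle
    push Not at hle
    exact hgc ((hQ.1.const g hg0 hgd).of_le hle)
  have hne : Bad.Nonempty := by
    refine ⟨a x + 1, by have := a.nonneg x; positivity, X, X_ne_zero, by rw [natDegree_X]; exact hd,
      fun h => ?_⟩
    have h0 : 0 ≤ a x + 1 := by have := a.nonneg x; positivity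
    have h1 := h.eq h0
    have h2 := N_X (K := K) a x h0
    have h3 : vv a x (X : K[X]) = a x := by simp [vv]
    linarith
  have hbdd : BddBelow Bad := ⟨ρ, fun r hr => (hlow r hr).le⟩
  set α := sInf Bad with hαdef
  have hρα : ρ ≤ α := le_csInf hne fun r hr => (hlow r hr).le
  have hα : 0 < α := hρ.trans_le hρα
  have hbelow : ∀ r < α, ∀ g : K[X], g ≠ 0 → g.natDegree < Q.natDegree → Const a x r g := by
    intro r hr g hg0 hgd
    by_contra hc
    rcases le_or_gt r 0 with h0 | h0
    · exact hc ((hQ.1.const g hg0 hgd).of_le (h0.trans hρ.le))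
    · exact absurd (csInf_le hbdd (show r ∈ Bad from ⟨h0, g, hg0, hgd, hc⟩)) (not_le.2 hr)
  have hfreq : ∀ ρ0, α < ρ0 → ∃ (P : K[X]) (ρ' : ℝ), α < ρ' ∧ ρ' < ρ0 ∧ Good a x ρ' P ∧
      P.natDegree < Q.natDegree := by
    intro ρ0 h0
    obtain ⟨r, ⟨hr, g, hg0, hgd, hgc⟩, hr0⟩ := exists_lt_of_csInf_lt hne h0
    obtain ⟨P, ρ', hP, hρ', hPg, ρ2, h2, h2', hPc⟩ := exists_good hdense hg0 hr hr0 hgc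
    refine ⟨P, ρ', ?_, hρ', hP, hPg.trans_lt hgd⟩
    exact (csInf_le hbdd (show ρ2 ∈ Bad from
      ⟨h2, P, hP.1.monic.ne_zero, hPg.trans_lt hgd, hPc⟩)).trans_lt h2'
  by_cases hαB : α ∈ Bad
  · have hρα' := hlow α hαB
    have hc : ∀ g : K[X], g.natDegree < Q.natDegree → N a x α g = vv a x g := by
      intro g hgd
      by_cases hg0 : g = 0
      · rw [hg0, N_zero]; simp [vv]
      have h1 : Tendsto (fun r => N a x r g) (nhdsWithin α (Set.Iio α)) (nhds (N a x α g)) :=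
        ((N_cont a x g).tendsto α).mono_left nhdsWithin_le_nhds
      have h2 : ∀ᶠ r in nhdsWithin α (Set.Iio α), N a x r g = vv a x g := by
        filter_upwards [Ioo_mem_nhdsLT hρα'] with r hr
        exact (hbelow r hr.2 g hg0 hgd).eq (hρ.trans hr.1).le
      exact tendsto_nhds_unique (h1.congr' h2) tendsto_const_nhds |>.symm ▸ rfl
    obtain ⟨-, g0, hg0, hgd, hgc⟩ := hαB
    have hex : ∃ n, ∃ g : K[X], g ≠ 0 ∧ g.natDegree = n ∧ ¬ Const a x α g := ⟨_, g0, hg0, rfl, hgc⟩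
    obtain ⟨g, hg, hgn, hgr⟩ := Nat.find_spec hex
    have hlc : g.leadingCoeff⁻¹ ≠ 0 := inv_ne_zero (leadingCoeff_ne_zero.2 hg)
    set P : K[X] := g * C g.leadingCoeff⁻¹ with hPdef
    have hPm : P.Monic := monic_mul_leadingCoeff_inv hg
    have hPd : P.natDegree = g.natDegree := natDegree_mul_C hlc
    have hPr : ¬ Const a x α P := fun h => hgr (h.of_mul hα)
    have hPQ : P.natDegree < Q.natDegree := by
      rw [hPd, hgn]
      exact (Nat.find_le ⟨g0, hg0, rfl, hgc⟩).trans_lt hgd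
    have hKey : Key a x α P := by
      refine ⟨hPm, ?_, ?_, hPr⟩
      · by_contra h0
        have h0 : P.natDegree = 0 := by omega
        rw [eq_C_of_natDegree_eq_zero h0] at hPr
        apply hPr
        apply const_C
        intro h3
        rw [eq_C_of_natDegree_eq_zero h0, h3, C_0] at hPm
        exact hPm.ne_zero rfl
      · intro q hq hqd
        by_contra hqc
        exact Nat.find_min hex (m := q.natDegree) (by rw [← hgn, ← hPd]; exact hqd)
          ⟨q, hq, rfl, hqc⟩
    exact caseB2 hB hι hα hKey (hc P hPQ) hfreq (caseB1 hB hι hρ hρα' hQ hc hKey hPQ hZ)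
  · refine caseA hB hι hρ hρα hQ ?_ hfreq hZ
    intro g hg0 hgd
    by_contra hgc
    exact hαB ⟨hα, g, hg0, hgd, hgc⟩

theorem base (hB : ∀ y, y ∈ B ↔ a y ≤ 1)
    (hιs : ∀ c, a (algebraMap K L c) ≤ 1 → ∃ r, ι r = c)
    {ρ : ℝ} (hρ : 0 < ρ) {Q : K[X]} (hQ : Good a x ρ Q) (hd : Q.natDegree = 1)
    (hZ : ZZ x ι FA (TT a x ρ)) : ZZ x ι FA (C.comp ι).range := by
  obtain ⟨hQ, c, hc0, hQc⟩ := hQ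
  have hac : 0 < a (algebraMap K L c) := a.pos (by simpa using hc0)
  set s : K[X] := C c⁻¹ * Q with hsdef
  have hs : N a x ρ s = 1 := by
    rw [hsdef, N_mul a x hρ, N_C, hQc, map_inv₀, map_inv₀, inv_mul_cancel₀ hac.ne']
  have hZ' : ZZ x ι FA (adj (C.comp ι).range s) := by
    refine J2_mono ?_ hZ
    intro g hg
    rw [mem_TT hρ] at hg
    refine (hQ.expand hρ (adj (C.comp ι).range s).toAddSubgroup.toAddSubmonoid ?_ g hg)
    intro g i hg0 hgd hgi
    change _ ∈ adj (C.comp ι).range s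
    have e : g * Q ^ i = (g * C c ^ i) * s ^ i := by
      rw [mul_pow, ← C_pow, ← C_pow, inv_pow]
      have : C (c ^ i) * C (c ^ i)⁻¹ = (1 : K[X]) := by
        rw [← C_mul, mul_inv_cancel₀ (pow_ne_zero _ hc0), C_1]
      linear_combination (-(g * Q ^ i)) * this
    rw [e]
    refine mul_mem (le_adj _ _ ?_) (pow_mem (mem_adj _ _) i)
    have h0 : g = C (g.coeff 0) := eq_C_of_natDegree_eq_zero (by omega)
    rw [h0, ← C_pow, ← C_mul]
    rw [h0, vv_C, hQc] at hgi
    obtain ⟨r, hr⟩ := hιs (g.coeff 0 * c ^ i) (by simpa using hgi)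
    exact ⟨r, by simp [hr]⟩
  have e : MvPolynomial.map (C.comp ι) FA = MvPolynomial.map (Subring.subtype (C.comp ι).range)
      (MvPolynomial.map (C.comp ι).rangeRestrict FA) := by
    rw [MvPolynomial.map_map]; rfl
  unfold ZZ at hZ' ⊢
  rw [e] at hZ' ⊢
  have hsB : phi K x s ∈ B := (hB _).2 ((vv_le_N a x hρ.le s).trans hs.le)
  refine adj_lemma (φ := phi K x) (C.comp ι).range s ⟨_, hsB⟩ rfl 0 0 (by simp) (Or.inl rfl) ?_ _ hZ'
  intro z hz
  refine ⟨1, 1, 0, by simp, ?_⟩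
  have hsd : s.natDegree = 1 := by
    rw [hsdef, natDegree_C_mul (inv_ne_zero hc0), hd]
  have hz0 : z = 0 := by
    obtain ⟨zK, hzK⟩ : ∃ zK : K[X], zK.map C = z.map (Subring.subtype _) := by
      have h6 : z.map (Subring.subtype (C.comp ι).range) ∈ Polynomial.lifts (C : K →+* K[X]) := by
        rw [Polynomial.lifts_iff_coeff_lifts]
        intro k
        obtain ⟨r, hr⟩ := (z.coeff k).2
        exact ⟨ι r, by simpa using hr⟩
      exact (Polynomial.mem_lifts _).1 h6
    have h7 : zK.comp s = 0 := by
      rw [comp, ← eval_map, hzK, eval_map]; exact hz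
    have h8 : zK = 0 := by
      rcases comp_eq_zero_iff.1 h7 with h | ⟨-, h⟩
      · exact h
      · rw [h, natDegree_C] at hsd; omega
    apply Polynomial.map_injective (Subring.subtype (C.comp ι).range) Subtype.coe_injective
    rw [← hzK, h8]; simp
  rw [hz0]; simp

theorem final (hB : ∀ y, y ∈ B ↔ a y ≤ 1) (hι : ∀ r, a (algebraMap K L (ι r)) ≤ 1)
    (hιs : ∀ c, a (algebraMap K L c) ≤ 1 → ∃ r, ι r = c)
    (hdense : ∀ α β : ℝ, 0 < α → α < β →
      ∃ c : K, α < a (algebraMap K L c) ∧ a (algebraMap K L c) < β)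
    (hZ : ZZ x ι FA (B.comap (phi K x))) : ZZ x ι FA (C.comp ι).range := by
  have main : ∀ d : ℕ, ∀ (Q : K[X]) (ρ : ℝ), Q.natDegree = d → 0 < ρ → Good a x ρ Q →
      ZZ x ι FA (TT a x ρ) → ZZ x ι FA (C.comp ι).range := by
    intro d
    induction d using Nat.strong_induction_on with
    | _ d ih =>
      intro Q ρ hd hρ hQ hZ
      have := hQ.1.pos
      rcases (show d = 1 ∨ 1 < d by omega) with h | h
      · exact base hB hιs hρ hQ (hd.trans h) hZ
      · obtain ⟨P, ρ', hρ', hP, hPd, hZ'⟩ := descent hB hι hdense hρ hQ (by omega) hZ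
        exact ih _ (by omega) P ρ' rfl hρ' hP hZ'
  have hmin0 : minpoly K x ≠ 0 := minpoly.ne_zero (Algebra.IsIntegral.isIntegral x)
  have hnc : ∀ r, 0 < r → ¬ Const a x r (minpoly K x) := by
    intro r hr h
    have := h.pos hr
    simp [vv] at this
  obtain ⟨P, ρ', hρ', hP, -, hZ'⟩ := tail hB hι (α := 0) le_rfl (d := (minpoly K x).natDegree + 1)
    1 (by rw [N_one]) (by simp [vv]) (B.comap (phi K x)) (by
      intro g hg
      have hg1 : vv a x g ≤ 1 := (hB _).1 hg
      have h1 : ∀ᶠ ρ' in nhdsWithin 0 (Set.Ioi 0), ∀ i ∈ Finset.range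
          ((taylor x (g.map (algebraMap K L))).natDegree + 1), a (tc x g i) * ρ' ^ i ≤ 1 := by
        rw [Filter.eventually_all_finset]
        intro i _
        rcases Nat.eq_zero_or_pos i with rfl | hi
        · filter_upwards with r
          rw [tc_zero, pow_zero, mul_one]; exact hg1
        · have hc : Continuous fun r : ℝ => a (tc x g i) * r ^ i := by fun_prop
          have := (hc.tendsto 0).eventually_le_const (u := 1) (by simp [hi.ne'])
          exact this.filter_mono nhdsWithin_le_nhds
      filter_upwards [h1, eventually_mem_nhdsWithin] with r hr hr0
      apply le_adj
      rw [mem_TT hr0]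
      obtain ⟨i, hi⟩ := exists_N a x r g
      rw [hi]
      by_cases hid : i ∈ Finset.range ((taylor x (g.map (algebraMap K L))).natDegree + 1)
      · exact hr i hid
      · have : tc x g i = 0 := coeff_eq_zero_of_natDegree_lt (by
          simp only [Finset.mem_range] at hid; omega)
        rw [this]; simp) (by
      intro ρ0 h0
      obtain ⟨r, hr, hr0⟩ := exists_between h0
      obtain ⟨P, ρ', hP, h1, h2, ρ2, h3, h4, -⟩ := exists_good hdense hmin0 hr hr0 (hnc r hr)
      exact ⟨P, ρ', h3.trans h4, h1, hP, by omega⟩) hZ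
  exact main _ P ρ' rfl hρ' hP hZ'

end descent
end HCot

namespace HCot
open MvPolynomial

theorem dense_case {K L R : Type*} [Field K] [Field L] [Algebra K L] [FiniteDimensional K L]
    [Algebra.IsSeparable K L] [CommRing R] (ι : R →+* K) (hinj : Function.Injective ι)
    (B : Subring L) [Algebra R B]
    (hcomp : ∀ r : R, (algebraMap R B r : L) = algebraMap K L (ι r))
    (a : AbsoluteValue L ℝ) [NA a] (hB : ∀ y, y ∈ B ↔ a y ≤ 1)
    (hι : ∀ r, a (algebraMap K L (ι r)) ≤ 1)
    (hιs : ∀ c, a (algebraMap K L c) ≤ 1 → ∃ r, ι r = c)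
    (hdense : ∀ α β : ℝ, 0 < α → α < β →
      ∃ c : K, α < a (algebraMap K L c) ∧ a (algebraMap K L c) < β) :
    Subsingleton (Algebra.H1Cotangent R B) := by
  have hev : ∀ F : MvPolynomial B R, eval₂ ((algebraMap K L).comp ι) (fun b : B => (b : L)) F =
      B.subtype (aeval (fun s : B => s) F) := by
    intro F
    have e : (algebraMap K L).comp ι = B.subtype.comp (algebraMap R B) := by
      ext r; exact (hcomp r).symm
    rw [aeval_def, hom_eval₂, e]; rfl
  apply subsingleton_of
  intro F h0 h1
  obtain ⟨x, hx⟩ := Field.exists_primitive_element K L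
  have hxi : IsIntegral K x := Algebra.IsIntegral.isIntegral x
  have hZ : ZZ x ι F (B.comap (phi K x)) := by
    refine final_step ι B (fun r => by rw [← hcomp]; exact (algebraMap R B r).2) x ?_ ?_ F
      (by rw [hev, h0, map_zero]) (fun b => by rw [hev, h1, map_zero])
    · exact (Algebra.IsSeparable.isSeparable K x).aeval_derivative_ne_zero (minpoly.aeval K x)
    · intro b _
      have hb : b ∈ IntermediateField.adjoin K {x} := by rw [hx]; trivial
      have hb2 : b ∈ Algebra.adjoin K {x} := by
        rw [← IntermediateField.adjoin_simple_toSubalgebra_of_isAlgebraic hxi.isAlgebraic]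
        exact hb
      rw [Algebra.adjoin_singleton_eq_range_aeval] at hb2
      exact hb2
  have hZ2 := final hB hι hιs hdense hZ
  obtain ⟨W, hW, hWF⟩ := J2_lift (φ := phi K x) (B := B) (Polynomial.C.comp ι) (fun s hs => hs) hZ2
  have : W = F := by
    refine MvPolynomial.map_injective (Polynomial.C.comp ι) ?_ hWF
    exact (Polynomial.C_injective).comp hinj
  rw [← this]
  have hk : RingHom.ker ((ev (phi K x) B).comp (map (Polynomial.C.comp ι))) =
      RingHom.ker (aeval (R := R) (fun s : B => s)).toRingHom := by
    ext p
    rw [RingHom.mem_ker, RingHom.mem_ker]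
    have e2 : (ev (phi K x) B).comp (map (Polynomial.C.comp ι)) p = B.subtype (aeval (fun s : B => s) p) := by
      rw [← hev]
      simp only [ev, RingHom.comp_apply, coe_eval₂Hom]
      rw [eval₂_map]
      congr 1
      ext r
      simp
    rw [e2]
    constructor
    · intro h; exact Subtype.coe_injective h
    · intro h
      have h : aeval (fun s : B => s) p = 0 := h
      rw [h, map_zero]
  rw [← hk]; exact hW

end HCot

namespace HCot
open IsLocalRing

theorem local_core {T : Type*} [CommRing T] [IsLocalRing T] [IsNoetherianRing T] (m : ℕ)
    (hm : Module.finrank (ResidueField T) (CotangentSpace T) ≤ m + 1) (I : Ideal T) [I.IsPrime]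
    (t : T) (htM : t ∈ maximalIdeal T) (htI : t ∉ I)
    (hM : maximalIdeal T ≤ I ⊔ Ideal.span {t}) :
    ∃ (n : ℕ) (f : Fin n → T), n ≤ m ∧ I = Ideal.span (Set.range f) := by
  classical
  have hIM : I ≤ maximalIdeal T := le_maximalIdeal (Ideal.IsPrime.ne_top inferInstance)
  let k := ResidueField T
  let V := CotangentSpace T
  let s : Set (maximalIdeal T) := {z | (z : T) ∈ I}
  let tM : maximalIdeal T := ⟨t, htM⟩
  let π := (maximalIdeal T).toCotangent
  have hs : Submodule.span k (π '' s) ≠ ⊤ := by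
    intro h
    rw [CotangentSpace.span_image_eq_top_iff] at h
    have h2 : Submodule.span T s ≤ Submodule.comap (maximalIdeal T).subtype I :=
      Submodule.span_le.2 fun z hz => hz
    rw [h] at h2
    exact htI (h2 (show tM ∈ ⊤ from trivial))
  have hst : Submodule.span k (π '' (insert tM s)) = ⊤ := by
    rw [CotangentSpace.span_image_eq_top_iff, eq_top_iff]
    rintro ⟨z, hz⟩ -
    obtain ⟨y, hy, w, hw, hyw⟩ := Submodule.mem_sup.1 (hM hz)
    obtain ⟨c, rfl⟩ := Ideal.mem_span_singleton'.1 hw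
    have e : (⟨z, hz⟩ : maximalIdeal T) = ⟨y, hIM hy⟩ + c • tM := by
      apply Subtype.ext; simp [← hyw, tM]
    rw [e]
    exact add_mem (Submodule.subset_span (Or.inr hy))
      (Submodule.smul_mem _ _ (Submodule.subset_span (Or.inl rfl)))
  obtain ⟨b, hbs, hbspan, hbli⟩ := exists_linearIndependent k (π '' s)
  have hbfin : b.Finite := hbli.setFinite
  have : Fintype b := hbfin.fintype
  have hcard : Fintype.card b ≤ m := by
    have h1 : Module.finrank k (Submodule.span k b) = Fintype.card b := by
      rw [finrank_span_set_eq_card hbli, Set.toFinset_card]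
    rw [hbspan] at h1
    have h2 := Submodule.finrank_lt hs
    have h3 := Nat.lt_of_lt_of_le h2 hm
    omega
  choose g hg using fun y : b => hbs y.2
  let f : Fin (Fintype.card b) → T := fun i => (g ((Fintype.equivFin b).symm i) : T)
  have hfI : ∀ i, f i ∈ I := fun i => (hg _).1
  refine ⟨Fintype.card b, f, hcard, le_antisymm ?_ (Ideal.span_le.2 (by rintro _ ⟨i, rfl⟩; exact hfI i))⟩
  have hspan : Submodule.span T (insert tM (Set.range g)) = ⊤ := by
    rw [← CotangentSpace.span_image_eq_top_iff, ← hst, Set.image_insert_eq, Set.image_insert_eq]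
    have : (π '' (Set.range g)) = b := by
      ext v
      constructor
      · rintro ⟨_, ⟨y, rfl⟩, rfl⟩
        have := (hg y).2
        change π (g y) ∈ b
        rw [this]; exact y.2
      · intro hv
        exact ⟨g ⟨v, hv⟩, ⟨_, rfl⟩, (hg ⟨v, hv⟩).2⟩
    change Submodule.span k (insert (π tM) (π '' (Set.range g))) = Submodule.span k (insert (π tM) (π '' s))
    rw [this, Submodule.span_insert, Submodule.span_insert, hbspan]
  apply Submodule.le_of_le_smul_of_le_jacobson_bot (I := maximalIdeal T)
    ((isNoetherianRing_iff_ideal_fg T).1 inferInstance I) (maximalIdeal_le_jacobson _)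
  intro y hy
  have h1 : (⟨y, hIM hy⟩ : maximalIdeal T) ∈ Submodule.span T (insert tM (Set.range g)) := by
    rw [hspan]; trivial
  rw [Submodule.mem_span_insert] at h1
  obtain ⟨c, z, hz, e⟩ := h1
  have hz' : (z : T) ∈ Ideal.span (Set.range f) := by
    have : Submodule.span T (Set.range g) ≤
        Submodule.comap (maximalIdeal T).subtype (Ideal.span (Set.range f)) := by
      rw [Submodule.span_le]
      rintro _ ⟨v, rfl⟩
      exact Submodule.subset_span ⟨Fintype.equivFin b v, by simp [f]⟩
    exact this hz
  have hzI : (z : T) ∈ I := (Ideal.span_le.2 (by rintro _ ⟨i, rfl⟩; exact hfI i)) hz'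
  have e2 : y = c * t + z := congrArg Subtype.val e
  have hc : c ∈ I := by
    have : c * t ∈ I := by
      have : c * t = y - z := by rw [e2]; ring
      rw [this]; exact sub_mem hy hzI
    exact (Ideal.IsPrime.mem_or_mem inferInstance this).resolve_right htI
  rw [e2, add_comm, mul_comm]
  exact Submodule.add_mem_sup hz' (Submodule.smul_mem_smul htM hc)

end HCot

namespace HCot
open IsLocalRing MvPolynomial

theorem span_loc {A C : Type*} [CommRing A] [IsDomain A] [IsDiscreteValuationRing A]
    [CommRing C] [IsDomain C] (m : ℕ) (ψ : MvPolynomial (Fin m) A →+* C)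
    (hψ : Function.Surjective ψ) (q : Ideal C) [q.IsPrime] (t0 : C) (ht0 : t0 ∈ q) (ht00 : t0 ≠ 0)
    (ht : ∀ c ∈ q, ∃ s ∉ q, ∃ c', s * c = t0 * c') :
    ∃ (n : ℕ) (f : Fin n → MvPolynomial (Fin m) A), n ≤ m ∧ (∀ i, ψ (f i) = 0) ∧
      ∀ k, ψ k = 0 → ∃ u, ψ u ∉ q ∧ u * k ∈ Ideal.span (Set.range f) := by
  let S := MvPolynomial (Fin m) A
  let q' : Ideal S := q.comap ψ
  have hq' : q'.IsPrime := Ideal.comap_isPrime ψ q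
  let T := Localization.AtPrime q'
  have hreg : IsRegularRing S := MvPolynomial.isRegularRing_of_isRegularRing _
  have hT : IsRegularLocalRing T := IsRegularRing.isRegularLocalRing_localization q'
  have hdim : Module.finrank (ResidueField T) (CotangentSpace T) ≤ m + 1 := by
    have h1 := (IsRegularLocalRing.iff_finrank_cotangentSpace T).1 hT
    have h2 : ringKrullDim T ≤ ringKrullDim S := by
      rw [IsLocalization.AtPrime.ringKrullDim_eq_height q' T]
      exact Ideal.height_le_ringKrullDim_of_ne_top hq'.ne_top
    have h3 : ringKrullDim S = 1 + m := by
      rw [MvPolynomial.ringKrullDim_of_isNoetherianRing,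
        IsDiscreteValuationRing.ringKrullDim_eq_one, Nat.card_fin]
    rw [← h1, h3] at h2
    have h4 : ((Module.finrank (ResidueField T) (CotangentSpace T) : ℕ) : WithBot ℕ∞) ≤
      ((m + 1 : ℕ) : WithBot ℕ∞) := by
      rw [add_comm] at h2
      exact_mod_cast h2
    exact_mod_cast h4
  let J : Ideal S := RingHom.ker ψ
  have hJ : J.IsPrime := RingHom.ker_isPrime ψ
  have hJq : J ≤ q' := fun p hp => by
    change ψ p ∈ q
    rw [RingHom.mem_ker.1 hp]; exact zero_mem _
  let I : Ideal T := J.map (algebraMap S T)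
  have hI : I.IsPrime := IsLocalization.isPrime_of_isPrime_disjoint q'.primeCompl T J hJ
    (Set.disjoint_left.2 fun p hp hp2 => hp (hJq hp2))
  obtain ⟨t, rfl⟩ := hψ t0
  have hmax : q'.map (algebraMap S T) = maximalIdeal T :=
    IsLocalization.AtPrime.map_eq_maximalIdeal q' T
  obtain ⟨n, g, hn, hg⟩ := local_core m hdim I (algebraMap S T t)
    (hmax ▸ Ideal.mem_map_of_mem _ ht0) (by
      intro h
      rw [IsLocalization.algebraMap_mem_map_algebraMap_iff q'.primeCompl] at h
      obtain ⟨u, hu, h⟩ := h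
      have h : ψ (u * t) = 0 := h
      rw [map_mul] at h
      rcases mul_eq_zero.1 h with h | h
      · apply hu
        change ψ u ∈ q
        rw [h]; exact zero_mem _
      · exact ht00 h) (by
      rw [← hmax, Ideal.map_le_iff_le_comap]
      intro p hp
      obtain ⟨s, hs, c', e⟩ := ht (ψ p) hp
      obtain ⟨s, rfl⟩ := hψ s
      obtain ⟨c', rfl⟩ := hψ c'
      have h1 : s * p - t * c' ∈ J := by
        rw [RingHom.mem_ker, map_sub, map_mul, map_mul, e, sub_self]
      have hsu : IsUnit (algebraMap S T s) :=
        IsLocalization.map_units T (⟨s, hs⟩ : q'.primeCompl)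
      rw [Ideal.mem_comap, ← Ideal.unit_mul_mem_iff_mem _ hsu, ← map_mul]
      have e2 : s * p = (s * p - t * c') + c' * t := by ring
      rw [e2, map_add, map_mul (algebraMap S T) c' t]
      exact Submodule.add_mem_sup (Ideal.mem_map_of_mem _ h1)
        (Ideal.mul_mem_left _ _ (Ideal.mem_span_singleton_self _)))
  have hgI : ∀ i, g i ∈ I := fun i => by rw [hg]; exact Ideal.subset_span ⟨i, rfl⟩
  have hch : ∀ i, ∃ f : S, ψ f = 0 ∧ ∃ s : q'.primeCompl, g i * algebraMap S T s = algebraMap S T f := by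
    intro i
    obtain ⟨⟨⟨f, hf⟩, s⟩, e⟩ := (IsLocalization.mem_map_algebraMap_iff q'.primeCompl T).1 (hgI i)
    exact ⟨f, hf, s, e⟩
  choose f hf s hs using hch
  refine ⟨n, f, hn, hf, ?_⟩
  intro k hk
  have h1 : algebraMap S T k ∈ (Ideal.span (Set.range f)).map (algebraMap S T) := by
    have h2 : algebraMap S T k ∈ I := Ideal.mem_map_of_mem _ hk
    rw [hg] at h2
    refine (Ideal.span_le.2 ?_) h2
    rintro _ ⟨i, rfl⟩
    have hsu : IsUnit (algebraMap S T (s i)) := IsLocalization.map_units T (s i)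
    rw [SetLike.mem_coe, ← Ideal.mul_unit_mem_iff_mem _ hsu, hs]
    exact Ideal.mem_map_of_mem _ (Ideal.subset_span ⟨i, rfl⟩)
  rw [IsLocalization.algebraMap_mem_map_algebraMap_iff q'.primeCompl] at h1
  obtain ⟨u, hu, h⟩ := h1
  exact ⟨u, hu, h⟩

/-- derivation along `c` -/
def DD {A L : Type*} [CommRing A] [Field L] {m : ℕ} (Ψ : MvPolynomial (Fin m) A →+* L)
    (c : Fin m → L) (p : MvPolynomial (Fin m) A) : L := ∑ j, c j * Ψ (pderiv j p)

section DD
variable {A L : Type*} [CommRing A] [Field L] {m : ℕ} (Ψ : MvPolynomial (Fin m) A →+* L)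
    (c : Fin m → L)

theorem DD_mul (p q : MvPolynomial (Fin m) A) :
    DD Ψ c (p * q) = Ψ p * DD Ψ c q + Ψ q * DD Ψ c p := by
  simp only [DD, Derivation.leibniz, smul_eq_mul, map_add, map_mul, Finset.mul_sum,
    ← Finset.sum_add_distrib]
  refine Finset.sum_congr rfl fun j _ => by ring

theorem DD_sum {n : ℕ} (r f : Fin n → MvPolynomial (Fin m) A) (hf : ∀ i, Ψ (f i) = 0) :
    DD Ψ c (∑ i, r i * f i) = ∑ i, Ψ (r i) * DD Ψ c (f i) := by
  have h : DD Ψ c (∑ i, r i * f i) = ∑ i, DD Ψ c (r i * f i) := by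
    simp only [DD, map_sum, Finset.mul_sum]
    rw [Finset.sum_comm]
  rw [h]
  refine Finset.sum_congr rfl fun i _ => ?_
  rw [DD_mul, hf, zero_mul, add_zero]

end DD

theorem jac {A L : Type*} [CommRing A] [Field L] {m n : ℕ} (hn : n ≤ m)
    (Ψ : MvPolynomial (Fin m) A →+* L)
    (f : Fin n → MvPolynomial (Fin m) A) (hf : ∀ i, Ψ (f i) = 0)
    (hk : ∀ k, Ψ k = 0 → ∃ u, Ψ u ≠ 0 ∧ u * k ∈ Ideal.span (Set.range f))
    (hsep : ∀ j, ∃ h : Polynomial A, Ψ (Polynomial.aeval (X j) h) = 0 ∧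
      Ψ (Polynomial.aeval (X j : MvPolynomial (Fin m) A) (Polynomial.derivative h)) ≠ 0)
    (r : Fin n → MvPolynomial (Fin m) A) (hr : ∀ j, Ψ (pderiv j (∑ i, r i * f i)) = 0) (i : Fin n) :
    Ψ (r i) = 0 := by
  classical
  let Φ : (Fin m → L) →ₗ[L] (Fin n → L) :=
    { toFun := fun c i => DD Ψ c (f i)
      map_add' := by
        intro c c'; ext i
        simp [DD, add_mul, Finset.sum_add_distrib]
      map_smul' := by
        intro b c; ext i
        simp [DD, Finset.mul_sum, mul_assoc] }
  have hinj : Function.Injective Φ := by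
    rw [injective_iff_map_eq_zero]
    intro c hc
    have hc' : ∀ i, DD Ψ c (f i) = 0 := fun i => congrFun hc i
    have hall : ∀ k, Ψ k = 0 → DD Ψ c k = 0 := by
      intro k hk0
      obtain ⟨u, hu, huk⟩ := hk k hk0
      obtain ⟨r, hr⟩ := (Ideal.mem_span_range_iff_exists_fun).1 huk
      have h1 : DD Ψ c (u * k) = 0 := by
        rw [← hr, DD_sum Ψ c r f hf]
        exact Finset.sum_eq_zero fun i _ => by rw [hc', mul_zero]
      rw [DD_mul, hk0, zero_mul, add_zero] at h1
      exact (mul_eq_zero.1 h1).resolve_left hu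
    ext j
    obtain ⟨h, h0, h1⟩ := hsep j
    have h2 := hall _ h0
    have h3 : DD Ψ c (Polynomial.aeval (X j : MvPolynomial (Fin m) A) h) =
        c j * Ψ (Polynomial.aeval (X j : MvPolynomial (Fin m) A) (Polynomial.derivative h)) := by
      unfold DD
      rw [Finset.sum_eq_single j]
      · rw [Derivation.map_aeval]; simp
      · intro j' _ hj'
        rw [Derivation.map_aeval, pderiv_X_of_ne (Ne.symm hj')]; simp
      · simp
    rw [h3] at h2
    exact (mul_eq_zero.1 h2).resolve_right h1
  have hle := LinearMap.finrank_le_finrank_of_injective hinj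
  simp only [Module.finrank_fin_fun] at hle
  have hsurj : Function.Surjective Φ :=
    (LinearMap.injective_iff_surjective_of_finrank_eq_finrank
      (by simp only [Module.finrank_fin_fun]; omega)).1 hinj
  obtain ⟨c, hc⟩ := hsurj (Pi.single i 1)
  have h1 : DD Ψ c (∑ i, r i * f i) = 0 := by
    unfold DD
    exact Finset.sum_eq_zero fun j _ => by rw [hr, mul_zero]
  rw [DD_sum Ψ c r f hf] at h1
  have h2 : ∀ i', DD Ψ c (f i') = (Pi.single i 1 : Fin n → L) i' := fun i' => congrFun hc i'
  simp only [h2] at h1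
  simpa [Pi.single_apply] using h1

end HCot

namespace HCot
open MvPolynomial

theorem poly_C {A C K L : Type*} [CommRing A] [IsDomain A] [IsDiscreteValuationRing A]
    [CommRing C] [IsDomain C] [Algebra A C] [Field K] [Field L] [Algebra A K] [IsFractionRing A K]
    [Algebra K L] [Algebra.IsSeparable K L] [Algebra C L] [Algebra A L] [IsScalarTower A C L]
    [IsScalarTower A K L] (hinj : Function.Injective (algebraMap C L))
    [Algebra.IsIntegral A C]
    (m : ℕ) (x : Fin m → C) (hψ : Function.Surjective (aeval (R := A) x))
    (q : Ideal C) [q.IsPrime] (t0 : C) (ht0 : t0 ∈ q) (ht00 : t0 ≠ 0)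
    (ht : ∀ c ∈ q, ∃ s ∉ q, ∃ c', s * c = t0 * c')
    (F : MvPolynomial (Fin m) A) (hF : aeval x F = 0) (hF' : ∀ j, aeval x (pderiv j F) = 0) :
    ∃ u, aeval x u ∉ q ∧ u * F ∈ (RingHom.ker (aeval (R := A) x)) ^ 2 := by
  obtain ⟨n, f, hn, hf, hk⟩ := span_loc m (aeval (R := A) x).toRingHom hψ q t0 ht0 ht00 ht
  obtain ⟨u, hu, huF⟩ := hk F hF
  refine ⟨u, hu, ?_⟩
  rw [Ideal.mem_span_range_iff_exists_fun] at huF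
  obtain ⟨r, hr⟩ := huF
  have hf' : ∀ i, aeval x (f i) = 0 := hf
  have hinj0 : ∀ c : C, algebraMap C L c = 0 ↔ c = 0 := fun c =>
    map_eq_zero_iff _ hinj
  let Ψ : MvPolynomial (Fin m) A →+* L := (algebraMap C L).comp (aeval (R := A) x).toRingHom
  have hΨ : ∀ p, Ψ p = algebraMap C L (aeval x p) := fun p => rfl
  have key := jac hn Ψ f (fun i => by rw [hΨ, hf' i, map_zero])
    (fun k hk0 => by
      obtain ⟨u, hu, h⟩ := hk k ((hinj0 _).1 hk0)
      refine ⟨u, fun h0 => hu ?_, h⟩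
      have := (hinj0 _).1 h0
      rw [this]; exact zero_mem _)
    (fun j => by
      have hx : IsIntegral A (x j) := Algebra.IsIntegral.isIntegral _
      have h1 : ∀ p : Polynomial A, Ψ (Polynomial.aeval (X j) p) =
          Polynomial.aeval (algebraMap C L (x j)) (p.map (algebraMap A K)) := by
        intro p
        rw [hΨ, ← Polynomial.aeval_algHom_apply, aeval_X, Polynomial.aeval_map_algebraMap,
          Polynomial.aeval_algebraMap_apply]
      have : FaithfulSMul C L := (faithfulSMul_iff_algebraMap_injective C L).2 hinj
      have : Module.IsTorsionFree A C := by
        have hAL : Function.Injective (algebraMap A L) := by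
          rw [IsScalarTower.algebraMap_eq A K L]
          exact (algebraMap K L).injective.comp (IsFractionRing.injective A K)
        rw [IsScalarTower.algebraMap_eq A C L, RingHom.coe_comp] at hAL
        have : FaithfulSMul A C := (faithfulSMul_iff_algebraMap_injective A C).2 hAL.of_comp
        infer_instance
      have hm := minpoly.isIntegrallyClosed_eq_field_fractions K L hx
      refine ⟨minpoly A (x j), ?_, ?_⟩
      · rw [h1, ← hm, minpoly.aeval]
      · rw [h1, ← Polynomial.derivative_map, ← hm]
        exact (Algebra.IsSeparable.isSeparable K _).aeval_derivative_ne_zero (minpoly.aeval K _))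
    r (fun j => by
      rw [hr, hΨ, Derivation.leibniz]
      simp [hF, hF' j])
  rw [← hr, pow_two]
  refine Ideal.sum_mem _ fun i _ => Ideal.mul_mem_mul ?_ (hf' i)
  exact (hinj0 _).1 (key i)

theorem ext_smul {R S : Type*} [CommRing R] [CommRing S] [Algebra R S]
    (P : Algebra.Extension R S) (w : P.H1Cotangent) (F : P.ker)
    (hF : Algebra.Extension.Cotangent.mk F = w.1) (u : P.Ring)
    (hu : u * F.1 ∈ P.ker ^ 2) : algebraMap P.Ring S u • w = 0 := by
  apply Algebra.Extension.h1Cotangentι_ext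
  rw [Algebra.Extension.H1Cotangent.val_smul, ← hF, algebraMap_smul, ← map_smul]
  exact (Algebra.Extension.Cotangent.mk_eq_zero_iff _).2 hu

theorem h1_C {A C K L : Type*} [CommRing A] [IsDomain A] [IsDiscreteValuationRing A]
    [CommRing C] [IsDomain C] [Algebra A C] [Field K] [Field L] [Algebra A K] [IsFractionRing A K]
    [Algebra K L] [Algebra.IsSeparable K L] [Algebra C L] [Algebra A L] [IsScalarTower A C L]
    [IsScalarTower A K L] (hinj : Function.Injective (algebraMap C L))
    [Algebra.IsIntegral A C] [Algebra.FiniteType A C]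
    (q : Ideal C) [q.IsPrime] (t0 : C) (ht0 : t0 ∈ q) (ht00 : t0 ≠ 0)
    (ht : ∀ c ∈ q, ∃ s ∉ q, ∃ c', s * c = t0 * c') (z : Algebra.H1Cotangent A C) :
    ∃ u ∉ q, u • z = 0 := by
  obtain ⟨m, f, hf⟩ := Algebra.FiniteType.iff_quotient_mvPolynomial''.1
    (inferInstance : Algebra.FiniteType A C)
  have hs : Function.Surjective (aeval (R := A) fun i => f (X i)) := by rwa [aeval_unique f] at hf
  let P : Algebra.Generators A C (Fin m) := Algebra.Generators.ofSurjective (fun i => f (X i)) hs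
  obtain ⟨w, rfl⟩ := P.equivH1Cotangent.surjective z
  obtain ⟨F, hFw⟩ := Algebra.Extension.Cotangent.mk_surjective w.1
  have hw : P.toExtension.cotangentComplex w.1 = 0 := w.2
  rw [← hFw] at hw
  have hp := pderiv_of_cotangentComplex P F hw
  obtain ⟨u, hu, huF⟩ := poly_C (K := K) (L := L) hinj m _ hs q t0 ht0 ht00 ht F.1 F.2 hp
  refine ⟨aeval (fun i => f (X i)) u, hu, ?_⟩
  rw [← map_smul]
  have : (aeval (fun i => f (X i)) u : C) • w = 0 := by
    exact ext_smul P.toExtension w F hFw u huF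
  rw [this, map_zero]

end HCot

namespace HCot

section dvr
variable {A K : Type*} [CommRing A] [IsDomain A] [Field K] [Algebra A K]

theorem isUnit_of_abs
    (hinj : Function.Injective (algebraMap A K))
    (b : AbsoluteValue K ℝ)
    (hιs : ∀ c, b c ≤ 1 → ∃ r, algebraMap A K r = c) (r : A) (hr : b (algebraMap A K r) = 1) : IsUnit r := by
  have h0 : algebraMap A K r ≠ 0 := by
    intro h; rw [h, map_zero] at hr; exact zero_ne_one hr
  obtain ⟨s, hs⟩ := hιs (algebraMap A K r)⁻¹ (by rw [map_inv₀, hr, inv_one])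
  refine IsUnit.of_mul_eq_one s (hinj ?_)
  rw [map_mul, hs, mul_inv_cancel₀ h0, map_one]

theorem abs_of_isUnit
    (b : AbsoluteValue K ℝ)
    (hι : ∀ r, b (algebraMap A K r) ≤ 1) (r : A) (hr : IsUnit r) : b (algebraMap A K r) = 1 := by
  obtain ⟨s, hs⟩ := hr.exists_right_inv
  refine le_antisymm (hι r) ?_
  have h1 : b (algebraMap A K r) * b (algebraMap A K s) = 1 := by
    rw [← map_mul, ← map_mul, hs, map_one, map_one]
  nlinarith [hι s, b.nonneg (algebraMap A K r), b.nonneg (algebraMap A K s)]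

theorem is_dvr
    (hinj : Function.Injective (algebraMap A K))
    (b : AbsoluteValue K ℝ)
    (hι : ∀ r, b (algebraMap A K r) ≤ 1)
    (hιs : ∀ c, b c ≤ 1 → ∃ r, algebraMap A K r = c)
    (p : A)
    (hp0 : 0 < b (algebraMap A K p))
    (hp1 : b (algebraMap A K p) < 1)
    (hpow : ∀ c : K, c ≠ 0 → ∃ n : ℤ, b c = b (algebraMap A K p) ^ n) : IsDiscreteValuationRing A := by
  apply IsDiscreteValuationRing.ofHasUnitMulPowIrreducibleFactorization
  have hnn : ∀ r : A, r ≠ 0 → ∃ n : ℕ, b (algebraMap A K r) = b (algebraMap A K p) ^ n := by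
    intro r hr
    obtain ⟨n, hn⟩ := hpow (algebraMap A K r) (by
      rw [Ne, map_eq_zero_iff _ hinj]; exact hr)
    have hn0 : 0 ≤ n := by
      by_contra hlt
      push Not at hlt
      have := one_lt_zpow_of_neg₀ hp0 hp1 hlt
      rw [← hn] at this
      exact absurd (hι r) (not_le.2 this)
    obtain ⟨k, rfl⟩ := Int.eq_ofNat_of_zero_le hn0
    exact ⟨k, by rw [hn]; simp⟩
  have hpne : p ≠ 0 := by
    rintro rfl; rw [map_zero, map_zero] at hp0; exact lt_irrefl _ hp0
  refine ⟨p, ⟨?_, ?_⟩, ?_⟩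
  · intro h; exact hp1.ne (abs_of_isUnit b hι p h)
  · intro x y hxy
    have hx : x ≠ 0 := by rintro rfl; exact hpne (by rw [hxy, zero_mul])
    have hy : y ≠ 0 := by rintro rfl; exact hpne (by rw [hxy, mul_zero])
    obtain ⟨n, hn⟩ := hnn x hx
    obtain ⟨k, hk⟩ := hnn y hy
    have h1 : b (algebraMap A K p) ^ (n + k) = b (algebraMap A K p) ^ 1 := by
      rw [pow_add, ← hn, ← hk, pow_one, hxy, map_mul, map_mul]
    have h2 : n + k = 1 := (pow_right_injective₀ hp0 hp1.ne) h1
    rcases Nat.eq_zero_or_pos n with h | h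
    · left; apply isUnit_of_abs hinj b hιs; rw [hn, h, pow_zero]
    · right; apply isUnit_of_abs hinj b hιs; rw [hk, show k = 0 by omega, pow_zero]
  · intro x hx
    obtain ⟨n, hn⟩ := hnn x hx
    refine ⟨n, ?_⟩
    have hpn : algebraMap A K p ^ n ≠ 0 := pow_ne_zero _ (by
      rw [Ne, map_eq_zero_iff _ hinj]; exact hpne)
    obtain ⟨s, hs⟩ := hιs (algebraMap A K x / algebraMap A K p ^ n) (by
      rw [map_div₀, map_pow, hn, div_self (pow_ne_zero _ hp0.ne')])
    have hsu : IsUnit s := isUnit_of_abs hinj b hιs s (by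
      rw [hs, map_div₀, map_pow, hn, div_self (pow_ne_zero _ hp0.ne')])
    refine ⟨hsu.unit, hinj ?_⟩
    rw [IsUnit.unit_spec, map_mul, map_pow, hs, mul_div_cancel₀ _ hpn]

theorem is_frac
    (hinj : Function.Injective (algebraMap A K))
    (b : AbsoluteValue K ℝ)
    (hιs : ∀ c, b c ≤ 1 → ∃ r, algebraMap A K r = c) : IsFractionRing A K where
  map_units y := by
    rw [isUnit_iff_ne_zero, Ne, map_eq_zero_iff _ hinj]
    exact nonZeroDivisors.ne_zero y.2
  surj z := by
    by_cases h : b z ≤ 1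
    · obtain ⟨r, hr⟩ := hιs z h
      exact ⟨(r, 1), by simp [hr]⟩
    · have hz : z ≠ 0 := by rintro rfl; simp at h
      obtain ⟨r, hr⟩ := hιs z⁻¹ (by
        rw [map_inv₀]; exact inv_le_one_of_one_le₀ (not_le.1 h).le)
      have hr0 : r ≠ 0 := by
        rintro rfl; rw [map_zero] at hr; exact inv_ne_zero hz hr.symm
      exact ⟨(1, ⟨r, mem_nonZeroDivisors_of_ne_zero hr0⟩), by simp [hr, hz]⟩
  exists_of_eq h := ⟨1, by rw [hinj h]⟩

end dvr

theorem integral_mem {A L : Type*} [CommRing A] [Field L] [Algebra A L] (a : AbsoluteValue L ℝ)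
    (B : Subring L) (hB : ∀ y, y ∈ B ↔ a y ≤ 1)
    (hA : ∀ r, algebraMap A L r ∈ B) (c : L) (hc : IsIntegral A c) : c ∈ B := by
  let V : ValuationSubring L := { B with
    mem_or_inv_mem' := by
      intro x
      change x ∈ B ∨ x⁻¹ ∈ B
      rw [hB, hB, map_inv₀]
      rcases le_total (a x) 1 with h | h
      · left; exact h
      · right; exact inv_le_one_of_one_le₀ h }
  have hV : IsIntegral V c := by
    let g : A →+* V := RingHom.codRestrict (algebraMap A L) V hA
    obtain ⟨p, hp, hp2⟩ := hc
    refine ⟨p.map g, hp.map g, ?_⟩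
    rw [Polynomial.eval₂_map]
    exact hp2
  obtain ⟨y, hy⟩ := IsIntegrallyClosed.isIntegral_iff.1 hV
  rw [← hy]; exact y.2

theorem exists_t0 {C : Type*} [CommRing C] [IsDedekindDomain C] (q : Ideal C) [q.IsPrime]
    (hq : q ≠ ⊥) : ∃ t0 ∈ q, t0 ≠ 0 ∧ ∀ c ∈ q, ∃ s ∉ q, ∃ c', s * c = t0 * c' := by
  have hlt : ¬ q ≤ q ^ 2 := by
    have : q ^ 2 < q ^ 1 := Ideal.pow_right_strictAnti q hq (Ideal.IsPrime.ne_top ‹_›) (show 1 < 2 by norm_num)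
    rw [pow_one] at this
    exact this.not_ge
  obtain ⟨t, htq, ht2⟩ := SetLike.not_le_iff_exists.1 hlt
  refine ⟨t, htq, fun h => ht2 (h ▸ zero_mem _), ?_⟩
  obtain ⟨J, hJ⟩ := Ideal.dvd_iff_le.2 ((Ideal.span_singleton_le_iff_mem q).2 htq)
  have hJq : ¬ J ≤ q := by
    intro h
    apply ht2
    rw [pow_two]
    exact Ideal.mul_mono_right h (hJ ▸ Ideal.mem_span_singleton_self t)
  obtain ⟨s, hsJ, hsq⟩ := SetLike.not_le_iff_exists.1 hJq
  intro c hc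
  have : s * c ∈ Ideal.span {t} := by
    rw [hJ, mul_comm s c]; exact Ideal.mul_mem_mul hc hsJ
  obtain ⟨c', h⟩ := Ideal.mem_span_singleton'.1 this
  exact ⟨s, hsq, c', by rw [← h, mul_comm]⟩

theorem dede_loc {C : Type*} [CommRing C] [IsDedekindDomain C] (q : Ideal C) [q.IsPrime]
    (hq : q ≠ ⊥) (c d : C) : ∃ x s, s ∉ q ∧ (c * x = d * s ∨ d * x = c * s) := by
  have := IsLocalization.AtPrime.isDiscreteValuationRing_of_dedekind_domain C hq
    (Localization.AtPrime q)
  have hinj : Function.Injective (algebraMap C (Localization.AtPrime q)) :=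
    IsLocalization.injective _ q.primeCompl_le_nonZeroDivisors
  obtain ⟨e, he⟩ := ValuationRing.cond (algebraMap C (Localization.AtPrime q) c)
    (algebraMap C (Localization.AtPrime q) d)
  obtain ⟨⟨x, s⟩, hxs⟩ := IsLocalization.surj q.primeCompl e
  refine ⟨x, s, s.2, ?_⟩
  have hxs : e * algebraMap C (Localization.AtPrime q) s = algebraMap C _ x := hxs
  refine he.imp (fun h => hinj ?_) (fun h => hinj ?_)
  · rw [map_mul, map_mul, ← h, ← hxs]; ring
  · rw [map_mul, map_mul, ← h, ← hxs]; ring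

end HCot

namespace HCot

/-- Generic localisation step. -/
theorem h1_loc {R C B : Type*} [CommRing R] [CommRing C] [CommRing B] [Algebra R C] [Algebra R B]
    [Algebra C B] [IsScalarTower R C B] (q : Ideal C) [q.IsPrime]
    [IsLocalization q.primeCompl B] (h : ∀ z : Algebra.H1Cotangent R C, ∃ u ∉ q, u • z = 0) :
    Subsingleton (Algebra.H1Cotangent R B) := by
  have hl := Algebra.H1Cotangent.isLocalizedModule (R := R) (S := C) (T := B) q.primeCompl
  have h0 : ∀ w : Algebra.H1Cotangent R B, w = 0 := by
    intro w
    obtain ⟨⟨z, s⟩, hz⟩ := IsLocalizedModule.surj q.primeCompl (Algebra.H1Cotangent.map R R C B) w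
    obtain ⟨u, hu, huz⟩ := h z
    have h1 : (⟨u, hu⟩ : q.primeCompl) • s • w = 0 := by
      rw [hz, ← LinearMap.map_smul_of_tower]
      have : (⟨u, hu⟩ : q.primeCompl) • z = 0 := huz
      change Algebra.H1Cotangent.map R R C B ((⟨u, hu⟩ : q.primeCompl) • z) = 0
      rw [this, map_zero]
    have hi := IsLocalizedModule.smul_injective (S := q.primeCompl) (Algebra.H1Cotangent.map R R C B)
    have h2 := hi _ (h1.trans (smul_zero _).symm)
    exact hi _ (h2.trans (smul_zero _).symm)
  exact ⟨fun x y => by rw [h0 x, h0 y]⟩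

theorem discrete_core {K L A : Type*} [Field K] [Field L] [Algebra K L] [FiniteDimensional K L]
    [Algebra.IsSeparable K L] [CommRing A] [IsDomain A] [IsDiscreteValuationRing A]
    [Algebra A K] [IsFractionRing A K] [Algebra A L] [IsScalarTower A K L]
    (B : Subring L) [Algebra A B]
    (hcomp : ∀ r : A, (algebraMap A B r : L) = algebraMap A L r)
    (a : AbsoluteValue L ℝ) [NA a] (hB : ∀ y, y ∈ B ↔ a y ≤ 1)
    (p : A) (hp0 : 0 < a (algebraMap A L p)) (hp1 : a (algebraMap A L p) < 1) :
    Subsingleton (Algebra.H1Cotangent A B) := by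
  let C := integralClosure A L
  have hCB : ∀ c : C, (c : L) ∈ B := fun c =>
    integral_mem (A := A) a B hB (fun r => by rw [← hcomp]; exact (algebraMap A B r).2) c c.2
  have hC1 : ∀ c : C, a (c : L) ≤ 1 := fun c => (hB _).1 (hCB c)
  have i1 : IsDedekindDomain C := integralClosure.isDedekindDomain A K L
  have i2 : IsFractionRing C L := IsIntegralClosure.isFractionRing_of_finite_extension A K L C
  have i3 : Module.Finite A C := IsIntegralClosure.finite A K L C
  let q : Ideal C :=
    { carrier := {c | a (c : L) < 1}
      zero_mem' := by simp
      add_mem' := by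
        intro x y hx hy
        exact (NA.na (x : L) (y : L)).trans_lt (max_lt hx hy)
      smul_mem' := by
        intro x y hy
        have hy : a (y : L) < 1 := hy
        change a ((x : L) * (y : L)) < 1
        rw [map_mul]
        nlinarith [hC1 x, a.nonneg (y : L), a.nonneg (x : L)] }
  have hqm : ∀ c : C, c ∈ q ↔ a (c : L) < 1 := fun c => Iff.rfl
  have hqn : ∀ c : C, c ∉ q ↔ a (c : L) = 1 := fun c => by
    rw [hqm, not_lt]; exact ⟨fun h => le_antisymm (hC1 c) h, fun h => h.ge⟩
  have hq : q.IsPrime := by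
    refine ⟨?_, ?_⟩
    · rw [Ne, Ideal.eq_top_iff_one, hqm]; simp
    · intro x y hxy
      by_contra hcon
      push Not at hcon
      have h1 := (hqn _).1 hcon.1
      have h2 := (hqn _).1 hcon.2
      have h3 := (hqm _).1 hxy
      rw [show ((x * y : C) : L) = x * y from rfl, map_mul, h1, h2] at h3
      norm_num at h3
  have hq0 : q ≠ ⊥ := by
    intro h
    have : algebraMap A C p ∈ q := hp1
    rw [h, Ideal.mem_bot] at this
    have h2 : algebraMap A L p = 0 := congrArg (fun c : C => (c : L)) this
    rw [h2, map_zero] at hp0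
    exact lt_irrefl _ hp0
  obtain ⟨t0, ht0, ht00, ht⟩ := exists_t0 q hq0
  let g : C →+* B := RingHom.codRestrict C.val.toRingHom B hCB
  letI : Algebra C B := g.toAlgebra
  have hg : ∀ c : C, ((algebraMap C B c : B) : L) = c := fun c => rfl
  have i4 : IsScalarTower A C B := IsScalarTower.of_algebraMap_eq (by
    intro r
    apply Subtype.ext
    rw [hcomp, hg]; rfl)
  have i5 : IsLocalization q.primeCompl B :=
    { map_units := by
        intro y
        have hy := (hqn _).1 y.2
        have hy0 : ((y : C) : L) ≠ 0 := by
          intro h; rw [h, map_zero] at hy; exact zero_ne_one hy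
        refine IsUnit.of_mul_eq_one (⟨((y : C) : L)⁻¹, (hB _).2 (by rw [map_inv₀, hy, inv_one])⟩ : B) ?_
        apply Subtype.ext
        exact mul_inv_cancel₀ hy0
      surj := by
        intro z
        obtain ⟨c, d, hd, hcd⟩ := IsFractionRing.div_surjective (A := C) (z : L)
        have hd0 : ((d : C) : L) ≠ 0 := by
          intro h
          exact nonZeroDivisors.ne_zero hd (Subtype.ext h)
        have hcd' : (z : L) * d = c := by
          rw [← hcd]; exact div_mul_cancel₀ _ hd0
        have hz1 := (hB _).1 z.2
        obtain ⟨x, s, hs, h⟩ := dede_loc q hq0 c d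
        by_cases hc0 : (c : L) = 0
        · have hz : (z : L) = 0 := by
            rw [hc0] at hcd'
            exact (mul_eq_zero.1 hcd').resolve_right hd0
          refine ⟨(0, 1), ?_⟩
          apply Subtype.ext
          simp [hz]
        rcases h with h | h
        · have h' : (c : L) * x = d * s := congrArg (fun c : C => (c : L)) h
          have hs1 := (hqn _).1 hs
          have hz0 : (z : L) ≠ 0 := by
            intro h; rw [h, zero_mul] at hcd'; exact hc0 hcd'.symm
          have hzx : (z : L) * x = s := by
            apply mul_left_cancel₀ hd0
            rw [← h', ← hcd']; ring
          have hx : x ∉ q := by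
            rw [hqn]
            have : a z * a (x : L) = 1 := by rw [← map_mul, hzx, hs1]
            have hx1 := hC1 x
            nlinarith [a.nonneg (z : L), a.nonneg (x : L)]
          exact ⟨(s, ⟨x, hx⟩), Subtype.ext hzx⟩
        · have h' : (d : L) * x = c * s := congrArg (fun c : C => (c : L)) h
          refine ⟨(x, ⟨s, hs⟩), Subtype.ext ?_⟩
          change (z : L) * s = x
          apply mul_left_cancel₀ hd0
          rw [h', ← hcd']; ring
      exists_of_eq := by
        intro x y h
        refine ⟨1, ?_⟩
        have : x = y := Subtype.ext (congrArg (fun c : B => (c : L)) h)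
        rw [this] }
  refine h1_loc (R := A) q (h1_C (K := K) (L := L) ?_ q t0 ht0 ht00 ht)
  exact Subtype.coe_injective

theorem discrete_case {K L R : Type*} [Field K] [Field L] [Algebra K L] [FiniteDimensional K L]
    [Algebra.IsSeparable K L] [CommRing R] (ι : R →+* K) (hinj : Function.Injective ι)
    (B : Subring L) [Algebra R B]
    (hcomp : ∀ r : R, (algebraMap R B r : L) = algebraMap K L (ι r))
    (a : AbsoluteValue L ℝ) [NA a] (hB : ∀ y, y ∈ B ↔ a y ≤ 1)
    (hι : ∀ r, a (algebraMap K L (ι r)) ≤ 1)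
    (hιs : ∀ c, a (algebraMap K L c) ≤ 1 → ∃ r, ι r = c)
    (π : K) (hp0 : 0 < a (algebraMap K L π)) (hp1 : a (algebraMap K L π) < 1)
    (hpow : ∀ c : K, c ≠ 0 → ∃ n : ℤ, a (algebraMap K L c) = a (algebraMap K L π) ^ n) :
    Subsingleton (Algebra.H1Cotangent R B) := by
  have : IsDomain R := hinj.isDomain ι
  letI : Algebra R K := ι.toAlgebra
  letI : Algebra R L := ((algebraMap K L).comp ι).toAlgebra
  have : IsScalarTower R K L := IsScalarTower.of_algebraMap_eq (fun _ => rfl)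
  let b : AbsoluteValue K ℝ := a.comp (algebraMap K L).injective
  have hb : ∀ c, b c = a (algebraMap K L c) := fun _ => rfl
  obtain ⟨p, rfl⟩ := hιs π hp1.le
  have := is_dvr (A := R) (K := K) hinj b hι hιs p hp0 hp1 hpow
  have := is_frac (A := R) (K := K) hinj b hιs
  exact discrete_core (K := K) (A := R) B hcomp a hB p hp0 hp1

end HCot

namespace HCot

/-- The multiplicative version of an additive real value. -/
def wexp : WithTop ℝ → ℝ
  | ⊤ => 0
  | (r : ℝ) => Real.exp (-r)

theorem wexp_top : wexp ⊤ = 0 := rfl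
theorem wexp_coe (r : ℝ) : wexp (r : WithTop ℝ) = Real.exp (-r) := rfl

theorem wexp_nonneg (x : WithTop ℝ) : 0 ≤ wexp x := by
  induction x with
  | top => exact le_refl _
  | coe r => exact (Real.exp_pos _).le

theorem wexp_eq_zero (x : WithTop ℝ) : wexp x = 0 ↔ x = ⊤ := by
  induction x with
  | top => simp [wexp_top]
  | coe r => simp [wexp_coe, Real.exp_ne_zero]

theorem wexp_add (x y : WithTop ℝ) : wexp (x + y) = wexp x * wexp y := by
  induction x with
  | top => simp [wexp_top]
  | coe r =>
    induction y with
    | top => simp [wexp_top]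
    | coe s => rw [← WithTop.coe_add, wexp_coe, wexp_coe, wexp_coe, neg_add, Real.exp_add]

theorem wexp_le (x y : WithTop ℝ) : wexp x ≤ wexp y ↔ y ≤ x := by
  induction x with
  | top => simp [wexp_top, wexp_nonneg]
  | coe r =>
    induction y with
    | top => simp [wexp_top, wexp_coe, Real.exp_pos]
    | coe s => rw [wexp_coe, wexp_coe, Real.exp_le_exp, neg_le_neg_iff, WithTop.coe_le_coe]

theorem wexp_min (x y : WithTop ℝ) : wexp (min x y) = max (wexp x) (wexp y) := by
  rcases le_total x y with h | h
  · rw [min_eq_left h, max_eq_left ((wexp_le _ _).2 h)]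
  · rw [min_eq_right h, max_eq_right ((wexp_le _ _).2 h)]

variable {L : Type*} [Field L] (v : AddValuation L (WithTop ℝ))

theorem av_na (x y : L) : wexp (v (x + y)) ≤ max (wexp (v x)) (wexp (v y)) := by
  rw [← wexp_min, wexp_le]; exact v.map_add x y

/-- The absolute value attached to a real additive valuation. -/
def av : AbsoluteValue L ℝ where
  toFun x := wexp (v x)
  map_mul' x y := by rw [v.map_mul, wexp_add]
  nonneg' x := wexp_nonneg _
  eq_zero' x := by rw [wexp_eq_zero, v.top_iff]
  add_le' x y := (av_na v x y).trans (max_le_add_of_nonneg (wexp_nonneg _) (wexp_nonneg _))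

theorem av_apply (x : L) : av v x = wexp (v x) := rfl

instance av_NA : NA (av v) := ⟨av_na v⟩

theorem av_le_one (x : L) : av v x ≤ 1 ↔ 0 ≤ v x := by
  have : (1 : ℝ) = wexp ((0 : ℝ) : WithTop ℝ) := by rw [wexp_coe]; simp
  rw [av_apply, this, wexp_le]; rfl

/-- Value group. -/
def vgrp {K : Type*} [Field K] (v : AddValuation K (WithTop ℝ)) : AddSubgroup ℝ where
  carrier := {r | ∃ c : K, v c = (r : WithTop ℝ)}
  zero_mem' := ⟨1, by rw [v.map_one]; rfl⟩
  add_mem' := by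
    rintro r s ⟨c, hc⟩ ⟨d, hd⟩
    exact ⟨c * d, by rw [v.map_mul, hc, hd]; rfl⟩
  neg_mem' := by
    rintro r ⟨c, hc⟩
    have hc0 : c ≠ 0 := by
      rintro rfl; rw [v.map_zero] at hc; exact WithTop.top_ne_coe hc
    refine ⟨c⁻¹, ?_⟩
    have h : v c⁻¹ + v c = 0 := by rw [← v.map_mul, inv_mul_cancel₀ hc0, v.map_one]
    have hi : v c⁻¹ ≠ ⊤ := by rw [Ne, v.top_iff]; exact inv_ne_zero hc0
    obtain ⟨s, hs⟩ := WithTop.ne_top_iff_exists.1 hi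
    rw [← hs, hc, ← WithTop.coe_add] at h
    have h : s + r = 0 := WithTop.coe_injective h
    rw [← hs, show s = -r by linarith]

theorem mem_vgrp {K : Type*} [Field K] (v : AddValuation K (WithTop ℝ)) (r : ℝ) :
    r ∈ vgrp v ↔ ∃ c : K, v c = (r : WithTop ℝ) := Iff.rfl

theorem exists_val {K : Type*} [Field K] (v : AddValuation K (WithTop ℝ)) (c : K) (hc : c ≠ 0) :
    ∃ r ∈ vgrp v, v c = (r : WithTop ℝ) := by
  have hi : v c ≠ ⊤ := by rwa [Ne, v.top_iff]
  obtain ⟨s, hs⟩ := WithTop.ne_top_iff_exists.1 hi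
  exact ⟨s, ⟨c, hs.symm⟩, hs.symm⟩

theorem cyc {K : Type*} [Field K] (v : AddValuation K (WithTop ℝ)) (r0 : ℝ)
    (h : vgrp v = AddSubgroup.closure {r0}) (hr : 0 < r0) :
    ∃ π : K, 0 < wexp (v π) ∧ wexp (v π) < 1 ∧
      ∀ c : K, c ≠ 0 → ∃ n : ℤ, wexp (v c) = wexp (v π) ^ n := by
  have hm : r0 ∈ vgrp v := by rw [h]; exact AddSubgroup.subset_closure rfl
  obtain ⟨π, hπ⟩ := hm
  refine ⟨π, ?_, ?_, ?_⟩
  · rw [hπ, wexp_coe]; exact Real.exp_pos _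
  · rw [hπ, wexp_coe, Real.exp_lt_one_iff]; linarith
  · intro c hc
    obtain ⟨s, hs, hs2⟩ := exists_val v c hc
    rw [h, AddSubgroup.mem_closure_singleton] at hs
    obtain ⟨n, rfl⟩ := hs
    refine ⟨n, ?_⟩
    rw [hs2, hπ, wexp_coe, wexp_coe, zsmul_eq_mul, ← mul_neg, mul_comm, Real.exp_mul,
      Real.rpow_intCast]

end HCot

/-- Let `(K, v_K)` be a field with a non-trivial real-valued valuation, let `L`
be a finite separable field extension of `K`, and let `v_L` be a real-valued valuation on `L`
extending `v_K`, with rings of integers `K°` and `L°`.  Then `H₁(𝕃_{L°/K°}) = 0`. -/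
theorem h1Cotangent_integers_eq_zero_of_finite_separable
    {K L : Type*} [Field K] [Field L] [Algebra K L]
    [FiniteDimensional K L] [Algebra.IsSeparable K L]
    (vK : AddValuation K (WithTop ℝ)) (vL : AddValuation L (WithTop ℝ))
    (hnt : vK.IsNontrivial)
    (hext : ∀ x : K, vL (algebraMap K L x) = vK x)
    [Algebra vK.unitBall vL.unitBall]
    (hcomp : ∀ x : vK.unitBall,
      (algebraMap vK.unitBall vL.unitBall x : L) = algebraMap K L (x : K)) :
    Subsingleton (Algebra.H1Cotangent vK.unitBall vL.unitBall) := by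
  have hB : ∀ y, y ∈ vL.unitBall ↔ HCot.av vL y ≤ 1 := fun y => (HCot.av_le_one vL y).symm
  have ha : ∀ c : K, HCot.av vL (algebraMap K L c) = HCot.wexp (vK c) := fun c => by
    rw [HCot.av_apply, hext]
  have hι : ∀ r : vK.unitBall, HCot.av vL (algebraMap K L (vK.unitBall.subtype r)) ≤ 1 := by
    intro r
    rw [HCot.av_le_one, hext]; exact r.2
  have hιs : ∀ c, HCot.av vL (algebraMap K L c) ≤ 1 → ∃ r, vK.unitBall.subtype r = c := by
    intro c hc
    rw [HCot.av_le_one, hext] at hc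
    exact ⟨⟨c, hc⟩, rfl⟩
  rcases AddSubgroup.dense_or_cyclic (HCot.vgrp vK) with hd | ⟨r0, hr0⟩
  · refine HCot.dense_case vK.unitBall.subtype Subtype.coe_injective vL.unitBall hcomp
      (HCot.av vL) hB hι hιs ?_
    intro α β hα hαβ
    have hlog : -Real.log β < -Real.log α := neg_lt_neg (Real.log_lt_log hα hαβ)
    obtain ⟨r, hr, hr1, hr2⟩ := hd.exists_between hlog
    obtain ⟨c, hc⟩ := hr
    refine ⟨c, ?_, ?_⟩
    · rw [ha, hc, HCot.wexp_coe, ← Real.log_lt_iff_lt_exp hα]; linarith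
    · rw [ha, hc, HCot.wexp_coe, ← Real.lt_log_iff_exp_lt (hα.trans hαβ)]; linarith
  · have hr00 : r0 ≠ 0 := by
      rintro rfl
      obtain ⟨x, hx0, hx⟩ := hnt
      obtain ⟨s, hs, hs2⟩ := HCot.exists_val vK x hx0
      rw [hr0, AddSubgroup.mem_closure_singleton] at hs
      obtain ⟨n, rfl⟩ := hs
      apply hx
      rw [hs2, smul_zero]; rfl
    have hex : ∃ r1 : ℝ, 0 < r1 ∧ HCot.vgrp vK = AddSubgroup.closure {r1} := by
      rcases lt_or_gt_of_ne hr00 with h | h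
      · refine ⟨-r0, by linarith, ?_⟩
        rw [hr0]
        ext y
        rw [AddSubgroup.mem_closure_singleton, AddSubgroup.mem_closure_singleton]
        exact ⟨fun ⟨n, hn⟩ => ⟨-n, by rw [← hn]; simp⟩, fun ⟨n, hn⟩ => ⟨-n, by rw [← hn]; simp⟩⟩
      · exact ⟨r0, h, hr0⟩
    obtain ⟨r1, hr1, hcl⟩ := hex
    obtain ⟨π, h0, h1, h2⟩ := HCot.cyc vK r1 hcl hr1
    refine HCot.discrete_case vK.unitBall.subtype Subtype.coe_injective vL.unitBall hcomp
      (HCot.av vL) hB hι hιs π ?_ ?_ ?_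
    · rw [ha]; exact h0
    · rw [ha]; exact h1
    · intro c hc
      rw [ha, ha]; exact h2 c hc
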